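/- arXiv:2212.02986 — 2 statements merged into one kernel-verified Lean document; each statement's English description precedes it below -/
import Mathlib

section
/- $\sum_{n=1}^{\infty} \frac{(-1)^{n-1}}{n^3 \binom{2n}{n}}\left(H_{2n-1}^{(2)} - \frac{123}{16} H_{n-1}^{(2)}\right) = \frac{451\,\zeta(5)}{40} - \frac{14\pi^2 \zeta(3)}{15}$. -/
open Filter Topology

/-- Generalized harmonic number `H_n^{(s)} = ∑_{k=1}^n 1/k^s`. -/
noncomputable def H (s n : ℕ) : ℝ := ∑ k ∈ Finset.range n, 1 / ((k:ℝ) + 1) ^ s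

/-- The Riemann zeta value `ζ(s) = ∑_{n ≥ 1} 1/n^s`. -/
noncomputable def zeta (s : ℕ) : ℝ := ∑' n : ℕ, 1 / ((n:ℝ) + 1) ^ s

open Filter Topology
namespace S7
open PowerSeries Finset

/-- the linear power series `m + α X` -/
noncomputable def L (m α : ℝ) : PowerSeries ℝ := C m + C α * X
/-- its inverse -/
noncomputable def I (m α : ℝ) : PowerSeries ℝ := PowerSeries.mk fun i => (-α)^i / m^(i+1)

lemma coeff_L_zero (m α : ℝ) : coeff 0 (L m α) = m := by simp [L]
lemma coeff_L_one (m α : ℝ) : coeff 1 (L m α) = α := by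
  simp [L, coeff_C, coeff_succ_mul_X]
lemma coeff_L_ge (m α : ℝ) (i : ℕ) : coeff (i+2) (L m α) = 0 := by
  rw [L, map_add, show i + 2 = (i+1)+1 from rfl, coeff_succ_mul_X, coeff_C, coeff_C]; simp

lemma L_mul_I {m : ℝ} (α : ℝ) (hm : m ≠ 0) : L m α * I m α = 1 := by
  ext i
  rw [L, add_mul, map_add, coeff_C_mul, mul_assoc, coeff_C_mul, mul_comm X]
  rcases i with _ | i
  · simp [I, hm]
  · rw [coeff_succ_mul_X]; simp only [I, coeff_mk, coeff_one]
    simp only [Nat.succ_ne_zero, if_false]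
    field_simp; ring

/-- truncated weighted seminorm -/
noncomputable def Nm (f : PowerSeries ℝ) : ℝ :=
  |coeff 0 f| + |coeff 1 f| / 1000 + |coeff 2 f| / 1000^2 + |coeff 3 f| / 1000^3

lemma Nm_nonneg (f : PowerSeries ℝ) : 0 ≤ Nm f := by unfold Nm; positivity

lemma Nm_zero : Nm 0 = 0 := by simp [Nm]

lemma Nm_one : Nm 1 = 1 := by simp [Nm, coeff_one]

lemma Nm_neg (f : PowerSeries ℝ) : Nm (-f) = Nm f := by simp [Nm]

lemma Nm_add (f g : PowerSeries ℝ) : Nm (f + g) ≤ Nm f + Nm g := by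
  unfold Nm
  simp only [map_add]
  have h0 := abs_add_le (coeff 0 f) (coeff 0 g)
  have h1 := abs_add_le (coeff 1 f) (coeff 1 g)
  have h2 := abs_add_le (coeff 2 f) (coeff 2 g)
  have h3 := abs_add_le (coeff 3 f) (coeff 3 g)
  linarith

lemma Nm_sum {ι : Type*} (s : Finset ι) (f : ι → PowerSeries ℝ) :
    Nm (∑ i ∈ s, f i) ≤ ∑ i ∈ s, Nm (f i) := by
  classical
  induction s using Finset.induction_on with
  | empty => simp [Nm_zero]
  | insert a s ha ih =>
    rw [sum_insert ha, sum_insert ha]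
    exact (Nm_add _ _).trans (by linarith)

lemma coeff1_mul (f g : PowerSeries ℝ) :
    coeff 1 (f * g) = coeff 0 f * coeff 1 g + coeff 1 f * coeff 0 g := by
  rw [coeff_mul]; simp [Finset.Nat.antidiagonal_succ]
lemma coeff0_mul (f g : PowerSeries ℝ) :
    coeff 0 (f * g) = coeff 0 f * coeff 0 g := by
  rw [coeff_mul]; simp
lemma coeff2_mul (f g : PowerSeries ℝ) :
    coeff 2 (f * g) = coeff 0 f * coeff 2 g + coeff 1 f * coeff 1 g + coeff 2 f * coeff 0 g := by
  rw [coeff_mul]; simp [Finset.Nat.antidiagonal_succ]; ring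
lemma coeff3_mul (f g : PowerSeries ℝ) :
    coeff 3 (f * g) = coeff 0 f * coeff 3 g + coeff 1 f * coeff 2 g + coeff 2 f * coeff 1 g
      + coeff 3 f * coeff 0 g := by
  rw [coeff_mul]; simp [Finset.Nat.antidiagonal_succ]; ring
lemma coeff4_mul (f g : PowerSeries ℝ) :
    coeff 4 (f * g) = coeff 0 f * coeff 4 g + coeff 1 f * coeff 3 g + coeff 2 f * coeff 2 g
      + coeff 3 f * coeff 1 g + coeff 4 f * coeff 0 g := by
  rw [coeff_mul]; simp [Finset.Nat.antidiagonal_succ]; ring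
lemma coeff5_mul (f g : PowerSeries ℝ) :
    coeff 5 (f * g) = coeff 0 f * coeff 5 g + coeff 1 f * coeff 4 g + coeff 2 f * coeff 3 g
      + coeff 3 f * coeff 2 g + coeff 4 f * coeff 1 g + coeff 5 f * coeff 0 g := by
  rw [coeff_mul]; simp [Finset.Nat.antidiagonal_succ]; ring

lemma Nm_mul (f g : PowerSeries ℝ) : Nm (f * g) ≤ Nm f * Nm g := by
  unfold Nm
  rw [coeff0_mul, coeff1_mul, coeff2_mul, coeff3_mul]
  generalize coeff 0 f = a0
  generalize coeff 1 f = a1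
  generalize coeff 2 f = a2
  generalize coeff 3 f = a3
  generalize coeff 0 g = b0
  generalize coeff 1 g = b1
  generalize coeff 2 g = b2
  generalize coeff 3 g = b3
  have e1 : |a0*b1 + a1*b0| ≤ |a0| * |b1| + |a1| * |b0| := by
    simpa [abs_mul] using abs_add_le (a0*b1) (a1*b0)
  have e2 : |a0*b2 + a1*b1 + a2*b0| ≤ |a0| * |b2| + |a1| * |b1| + |a2| * |b0| := by
    simpa [abs_mul] using abs_add_three (a0*b2) (a1*b1) (a2*b0)
  have e3 : |a0*b3 + a1*b2 + a2*b1 + a3*b0| ≤ |a0| * |b3| + |a1| * |b2| + |a2| * |b1| + |a3| * |b0| := by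
    have := abs_add_le (a0*b3 + a1*b2 + a2*b1) (a3*b0)
    have h2 := abs_add_three (a0*b3) (a1*b2) (a2*b1)
    simp only [abs_mul] at this h2
    linarith
  rw [abs_mul]
  have p1 : 0 ≤ |a1| * |b3| := by positivity
  have p2 : 0 ≤ |a2| * |b2| := by positivity
  have p3 : 0 ≤ |a3| * |b1| := by positivity
  have p4 : 0 ≤ |a2| * |b3| := by positivity
  have p5 : 0 ≤ |a3| * |b2| := by positivity
  have p6 : 0 ≤ |a3| * |b3| := by positivity
  nlinarith

lemma Nm_L {m : ℝ} (α : ℝ) (hm : 0 ≤ m) : Nm (L m α) = m + |α|/1000 := by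
  unfold Nm
  rw [coeff_L_zero, coeff_L_one, coeff_L_ge m α 0, coeff_L_ge m α 1, abs_of_nonneg hm]
  simp

lemma Nm_I {m : ℝ} (α : ℝ) (hm : |α|/1000 < m) : Nm (I m α) ≤ 1/(m - |α|/1000) := by
  have ha := abs_nonneg α
  have hm0 : 0 < m := by linarith [div_nonneg ha (by norm_num : (0:ℝ) ≤ 1000)]
  rw [le_div_iff₀ (by linarith)]
  unfold Nm
  simp only [I, coeff_mk, abs_div, abs_pow, abs_neg, abs_of_pos hm0]
  have : (|α| ^ 0 / m ^ (0 + 1) + |α| ^ 1 / m ^ (1 + 1) / 1000 + |α| ^ 2 / m ^ (2 + 1) / 1000 ^ 2 + |α| ^ 3 / m ^ (3 + 1) / 1000 ^ 3) *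
      (m - |α| / 1000) = 1 - (|α|/1000/m)^4 := by
    field_simp; ring
  rw [this]
  have : 0 ≤ (|α|/1000/m)^4 := by positivity
  linarith

lemma Nm_mul_le {f g : PowerSeries ℝ} {x y : ℝ} (hf : Nm f ≤ x) (hg : Nm g ≤ y) :
    Nm (f * g) ≤ x * y :=
  (Nm_mul f g).trans (mul_le_mul hf hg (Nm_nonneg _) ((Nm_nonneg _).trans hf))

lemma coeff_le_Nm (f : PowerSeries ℝ) {i : ℕ} (hi : i < 4) : |coeff i f| ≤ 1000^3 * Nm f := by
  have h0 := abs_nonneg (coeff 0 f)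
  have h1 := abs_nonneg (coeff 1 f)
  have h2 := abs_nonneg (coeff 2 f)
  have h3 := abs_nonneg (coeff 3 f)
  unfold Nm
  interval_cases i <;> linarith

/-- `f = c · exp(p₁X + ⋯ + p₅X⁵)` modulo `X⁶` -/
structure LJ (f : PowerSeries ℝ) (c : ℝ) (p : ℕ → ℝ) : Prop where
  h0 : coeff 0 f = c
  h1 : coeff 1 f = c * p 1
  h2 : coeff 2 f = c * (p 2 + p 1^2/2)
  h3 : coeff 3 f = c * (p 3 + p 1 * p 2 + p 1^3/6)
  h4 : coeff 4 f = c * (p 4 + p 1 * p 3 + p 2^2/2 + p 1^2*p 2/2 + p 1^4/24)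
  h5 : coeff 5 f = c * (p 5 + p 1 * p 4 + p 2 * p 3 + p 1^2 * p 3/2 + p 1 * p 2^2/2
    + p 1^3 * p 2/6 + p 1^5/120)

lemma LJ.mul {f g : PowerSeries ℝ} {c d : ℝ} {p q : ℕ → ℝ} (hf : LJ f c p) (hg : LJ g d q) :
    LJ (f * g) (c * d) (fun k => p k + q k) := by
  constructor
  · rw [coeff0_mul, hf.h0, hg.h0]
  · rw [coeff1_mul, hf.h0, hg.h0, hf.h1, hg.h1]; ring
  · rw [coeff2_mul, hf.h0, hg.h0, hf.h1, hg.h1, hf.h2, hg.h2]; ring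
  · rw [coeff3_mul, hf.h0, hg.h0, hf.h1, hg.h1, hf.h2, hg.h2, hf.h3, hg.h3]; ring
  · rw [coeff4_mul, hf.h0, hg.h0, hf.h1, hg.h1, hf.h2, hg.h2, hf.h3, hg.h3, hf.h4, hg.h4]; ring
  · rw [coeff5_mul, hf.h0, hg.h0, hf.h1, hg.h1, hf.h2, hg.h2, hf.h3, hg.h3, hf.h4, hg.h4,
      hf.h5, hg.h5]; ring

lemma LJ_one : LJ 1 1 (fun _ => 0) := by
  constructor <;> simp [coeff_one]

lemma LJ_prod {f : ℕ → PowerSeries ℝ} {c : ℕ → ℝ} {p : ℕ → ℕ → ℝ} (h : ∀ i, LJ (f i) (c i) (p i))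
    (n : ℕ) : LJ (∏ i ∈ range n, f i) (∏ i ∈ range n, c i) (fun k => ∑ i ∈ range n, p i k) := by
  induction n with
  | zero => simpa using LJ_one
  | succ n ih => simp only [prod_range_succ, sum_range_succ]; exact ih.mul (h n)

lemma LJ_C (c : ℝ) : LJ (C c) c (fun _ => 0) := by
  constructor <;> simp [coeff_C]

lemma LJ_L {m : ℝ} (α : ℝ) (hm : m ≠ 0) : LJ (L m α) m (fun k => -(-α/m)^k/k) := by
  constructor
  · exact coeff_L_zero m α
  · rw [coeff_L_one]; field_simp; simp
  · rw [coeff_L_ge m α 0]; push_cast; field_simp; ring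
  · rw [coeff_L_ge m α 1]; push_cast; field_simp; ring
  · rw [coeff_L_ge m α 2]; push_cast; field_simp; ring
  · rw [coeff_L_ge m α 3]; push_cast; field_simp; ring

lemma LJ_I {m : ℝ} (α : ℝ) (hm : m ≠ 0) : LJ (I m α) (1/m) (fun k => (-α/m)^k/k) := by
  constructor
  · simp [I]
  all_goals
    simp only [I, coeff_mk]; push_cast; field_simp; try ring

end S7

open Filter Topology
namespace S7
open PowerSeries Finset

noncomputable def aN (t : ℝ) (n : ℕ) : PowerSeries ℝ :=
  C (-(((n:ℝ)+1)*(2*n+3))) * (L (2*n+1) 4 * L (n+1) 2 * L (n+1) (2*t-1) * L (n+1) (3-2*t))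
noncomputable def aD (n : ℕ) : PowerSeries ℝ := L (2*n+1) 2 * L (n+1) 1
noncomputable def aI (n : ℕ) : PowerSeries ℝ := I (2*n+1) 2 * I (n+1) 1
noncomputable def dD (t : ℝ) (s : ℕ) : PowerSeries ℝ :=
  L (2*s+4) (4-2*t) * L (2*s+5) (4-2*t) * L (s+2) (t+1) * L (2*s+5) (2*t-2)
noncomputable def dI (t : ℝ) (s : ℕ) : PowerSeries ℝ :=
  I (2*s+4) (4-2*t) * I (2*s+5) (4-2*t) * I (s+2) (t+1) * I (2*s+5) (2*t-2)
noncomputable def bN (t : ℝ) (j : ℕ) : PowerSeries ℝ :=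
  L (2*j+2) (4-2*t) * L (2*j+3) (-2*t) * L (j+1) (t-1) * L (2*j+3) (2*t-2)
noncomputable def W (t : ℝ) (n j : ℕ) : PowerSeries ℝ :=
  (∏ i ∈ range n, (aN t i * aI i)) * (∏ i ∈ range j, bN t i) * ∏ i ∈ range (n+j), dI t i

/-- the polynomial numerator -/
noncomputable def Pp (R : Type*) [CommRing R] (n j e u : R) : R :=
  20*n^3+24*n^2*j+30*n^2*e+66*n^2+8*n*j^2+24*n*j*e+52*n*j-2*n*u^2+4*n*u*e+12*n*e^2+67*n*e+72*n
  +4*j^2*e+8*j^2+6*j*e^2+26*j*e+28*j-u^2*e-2*u^2+u*e^2+5*u*e+2*e^3+13*e^2+37*e+26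

noncomputable def P8 (t : ℝ) (n j : ℕ) : PowerSeries ℝ :=
  Pp (PowerSeries ℝ) (C (n:ℝ)) (C (j:ℝ)) (2*X) (2*C t*X)

noncomputable def gg (t : ℝ) (n j : ℕ) : PowerSeries ℝ := 4 * L (4*j+2*n+5) 2 * W t n j
noncomputable def hh (t : ℝ) (n j : ℕ) : PowerSeries ℝ := P8 t n j * W t n j * aI n

lemma aD_mul (n : ℕ) : aD n * aI n = 1 := by
  have h1 := L_mul_I (m := 2*(n:ℝ)+1) 2 (by positivity)
  have h2 := L_mul_I (m := (n:ℝ)+1) 1 (by positivity)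
  unfold aD aI
  linear_combination (L ((n:ℝ)+1) 1 * I ((n:ℝ)+1) 1) * h1 + h2

lemma dD_mul (t : ℝ) (s : ℕ) : dD t s * dI t s = 1 := by
  have h1 := L_mul_I (m := 2*(s:ℝ)+4) (4-2*t) (by positivity)
  have h2 := L_mul_I (m := 2*(s:ℝ)+5) (4-2*t) (by positivity)
  have h3 := L_mul_I (m := (s:ℝ)+2) (t+1) (by positivity)
  have h4 := L_mul_I (m := 2*(s:ℝ)+5) (2*t-2) (by positivity)
  unfold dD dI
  calc _ = (L (2*(s:ℝ)+4) (4-2*t) * I (2*s+4) (4-2*t)) * (L (2*(s:ℝ)+5) (4-2*t) * I (2*s+5) (4-2*t)) * (L ((s:ℝ)+2) (t+1) * I (s+2) (t+1)) * (L (2*(s:ℝ)+5) (2*t-2) * I (2*s+5) (2*t-2)) := by ring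
    _ = 1 := by rw [h1, h2, h3, h4]; ring

lemma W_succ_j (t : ℝ) (n j : ℕ) : W t n (j+1) = W t n j * bN t j * dI t (n+j) := by
  unfold W; rw [← add_assoc, prod_range_succ, prod_range_succ]; ring

lemma W_succ_n (t : ℝ) (n j : ℕ) : W t (n+1) j = W t n j * aN t n * aI n * dI t (n+j) := by
  unfold W; rw [add_right_comm, prod_range_succ, prod_range_succ]; ring

lemma poly_id (t : ℝ) (n j : ℕ) :
    P8 t n (j+1) * bN t j - P8 t n j * dD t (n+j) - 4 * L (4*j+2*(n+1:ℕ)+5) 2 * aN t n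
      + 4 * L (4*j+2*n+5) 2 * dD t (n+j) * aD n = 0 := by
  unfold P8 Pp bN dD aN aD L
  push_cast
  simp only [map_add, map_mul, map_sub, map_neg, map_one, map_ofNat]
  generalize C (n:ℝ) = ν
  generalize C (j:ℝ) = μ
  generalize C t = τ
  generalize (X : PowerSeries ℝ) = x
  ring

lemma wz (t : ℝ) (n j : ℕ) : hh t n (j+1) - hh t n j = gg t (n+1) j - gg t n j := by
  have h1 := aD_mul n
  have h2 := dD_mul t (n+j)
  have h3 := poly_id t n j
  unfold hh gg
  rw [W_succ_j, W_succ_n]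
  linear_combination (W t n j * aI n * dI t (n+j)) * h3
    + (P8 t n j * W t n j * aI n - 4 * L (4*j+2*n+5) 2 * W t n j * aD n * aI n ) * h2 - 4 * L (4*j+2*n+5) 2 * W t n j * h1

lemma wz_rect (t : ℝ) (M K : ℕ) :
    ∑ n ∈ range M, hh t n 0 - ∑ j ∈ range K, gg t 0 j
      = ∑ n ∈ range M, hh t n K - ∑ j ∈ range K, gg t M j := by
  have h1 : ∀ n, hh t n K - hh t n 0 = ∑ j ∈ range K, (gg t (n+1) j - gg t n j) := by
    intro n
    rw [← Finset.sum_range_sub (fun j => hh t n j)]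
    exact sum_congr rfl fun j _ => wz t n j
  have h2 : ∑ n ∈ range M, (hh t n K - hh t n 0) = ∑ j ∈ range K, (gg t M j - gg t 0 j) := by
    rw [sum_congr rfl fun n _ => h1 n, sum_comm]
    exact sum_congr rfl fun j _ => Finset.sum_range_sub (fun n => gg t n j) M
  rw [sum_sub_distrib, sum_sub_distrib] at h2
  linear_combination -h2

end S7

open Filter Topology
namespace S7
open PowerSeries Finset

lemma Nm_L_le {m α : ℝ} (ha : |α| ≤ 8) (hm : 0 ≤ m) : Nm (L m α) ≤ m + 1/125 := by
  rw [Nm_L α hm]; linarith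

lemma Nm_I_le {m α : ℝ} (ha : |α| ≤ 8) (hm : 1/125 < m) : Nm (I m α) ≤ 1/(m - 1/125) := by
  refine (Nm_I α (by linarith)).trans ?_
  apply one_div_le_one_div_of_le <;> linarith

lemma Nm_C (c : ℝ) : Nm (C c) = |c| := by simp [Nm, coeff_C]

lemma Nm_I_le' {m α c : ℝ} (ha : |α| ≤ 8) (hm : 1/125 < m) (h : 1 ≤ c * (m - 1/125)) :
    Nm (I m α) ≤ c := by
  refine (Nm_I_le ha hm).trans ?_
  rw [div_le_iff₀ (by linarith)]; exact h

lemma LI_le {m k α β c : ℝ} (ha : |α| ≤ 8) (hb : |β| ≤ 8) (hm : 0 ≤ m) (hk : 1/125 < k)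
    (h : m + 1/125 ≤ c * (k - 1/125)) : Nm (L m α * I k β) ≤ c := by
  refine (Nm_mul_le (Nm_L_le ha hm) (Nm_I_le hb hk)).trans ?_
  rw [mul_one_div, div_le_iff₀ (by linarith)]; exact h

lemma Nm_ratio_n {t : ℝ} (ht : |t| ≤ 2) (n j : ℕ) :
    Nm (aN t n * aI n * dI t (n+j)) ≤ 1/3 := by
  obtain ⟨t1, t2⟩ := abs_le.mp ht
  have hn : (0:ℝ) ≤ n := by positivity
  have hj : (0:ℝ) ≤ j := by positivity
  have e : aN t n * aI n * dI t (n+j) = (L (2*n+1) 4 * I (2*n+1) 2) * (L (n+1) 2 * I (n+1) 1) *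
      (L (n+1) (2*t-1) * I (2*(n+j:ℕ)+4) (4-2*t)) * (L (n+1) (3-2*t) * I ((n+j:ℕ)+2) (t+1)) *
      (C (-(((n:ℝ)+1)*(2*n+3))) * (I (2*(n+j:ℕ)+5) (4-2*t) * I (2*(n+j:ℕ)+5) (2*t-2))) := by
    unfold aN aI dI; ring
  rw [e]; push_cast
  have b1 : |4-2*t| ≤ 8 := by rw [abs_le]; constructor <;> linarith
  have b2 : |t+1| ≤ 8 := by rw [abs_le]; constructor <;> linarith
  have b3 : |2*t-2| ≤ 8 := by rw [abs_le]; constructor <;> linarith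
  have b4 : |2*t-1| ≤ 8 := by rw [abs_le]; constructor <;> linarith
  have b5 : |3-2*t| ≤ 8 := by rw [abs_le]; constructor <;> linarith
  have b6 : |(4:ℝ)| ≤ 8 := by norm_num
  have b7 : |(2:ℝ)| ≤ 8 := by norm_num
  have b8 : |(1:ℝ)| ≤ 8 := by norm_num
  have f1 : Nm (L (2*(n:ℝ)+1) 4 * I (2*n+1) 2) ≤ 51/50 :=
    LI_le b6 b7 (by linarith) (by linarith) (by linarith)
  have f2 : Nm (L ((n:ℝ)+1) 2 * I (n+1) 1) ≤ 51/50 :=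
    LI_le b7 b8 (by linarith) (by linarith) (by linarith)
  have f3 : Nm (L ((n:ℝ)+1) (2*t-1) * I (2*(n+j)+4) (4-2*t)) ≤ 1/2 :=
    LI_le b4 b1 (by linarith) (by linarith) (by linarith)
  have f4 : Nm (L ((n:ℝ)+1) (3-2*t) * I ((n+j)+2) (t+1)) ≤ 1 :=
    LI_le b5 b2 (by linarith) (by linarith) (by linarith)
  have f5 : Nm (C (-(((n:ℝ)+1)*(2*n+3))) * (I (2*(n+j)+5) (4-2*t) * I (2*(n+j)+5) (2*t-2))) ≤ 1/2 := by
    have g1 : Nm (I (2*((n:ℝ)+j)+5) (4-2*t)) ≤ 1/(2*(n+1)) := by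
      apply Nm_I_le' b1 (by linarith)
      rw [one_div_mul_eq_div, le_div_iff₀ (by linarith)]; linarith
    have g2 : Nm (I (2*((n:ℝ)+j)+5) (2*t-2)) ≤ 1/(2*n+3) := by
      apply Nm_I_le' b3 (by linarith)
      rw [one_div_mul_eq_div, le_div_iff₀ (by linarith)]; linarith
    have g0 : Nm (C (-(((n:ℝ)+1)*(2*n+3)))) ≤ ((n:ℝ)+1)*(2*n+3) := by
      rw [Nm_C, abs_neg, abs_of_nonneg (by positivity)]
    refine (Nm_mul_le g0 (Nm_mul_le g1 g2)).trans (le_of_eq ?_)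
    field_simp
  refine (Nm_mul_le (Nm_mul_le (Nm_mul_le (Nm_mul_le f1 f2) f3) f4) f5).trans ?_
  norm_num

lemma Nm_ratio_j {t : ℝ} (ht : |t| ≤ 2) (j : ℕ) :
    Nm (bN t j * dI t j) ≤ (j+1)/(j+4) := by
  obtain ⟨t1, t2⟩ := abs_le.mp ht
  have hj : (0:ℝ) ≤ j := by positivity
  have b1 : |4-2*t| ≤ 8 := by rw [abs_le]; constructor <;> linarith
  have b2 : |t+1| ≤ 8 := by rw [abs_le]; constructor <;> linarith
  have b3 : |2*t-2| ≤ 8 := by rw [abs_le]; constructor <;> linarith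
  have b4 : |-2*t| ≤ 8 := by rw [abs_le]; constructor <;> linarith
  have b5 : |t-1| ≤ 8 := by rw [abs_le]; constructor <;> linarith
  unfold bN dI
  refine (Nm_mul_le (Nm_mul_le (Nm_mul_le (Nm_mul_le (Nm_L_le b1 (by linarith)) (Nm_L_le b4 (by linarith)))
    (Nm_L_le b5 (by linarith))) (Nm_L_le b3 (by linarith))) (Nm_mul_le (Nm_mul_le (Nm_mul_le
    (Nm_I_le b1 (by linarith)) (Nm_I_le b1 (by linarith))) (Nm_I_le b2 (by linarith))) (Nm_I_le b3 (by linarith)))).trans ?_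
  simp only [one_div, ← mul_inv]
  rw [← div_eq_mul_inv]
  have q1 : 0 < 2*(j:ℝ)+4-125⁻¹ := by norm_num; linarith
  have q2 : 0 < 2*(j:ℝ)+5-125⁻¹ := by norm_num; linarith
  have q3 : 0 < (j:ℝ)+2-125⁻¹ := by norm_num; linarith
  rw [div_le_div_iff₀ (by positivity) (by positivity)]
  rw [← sub_nonneg]
  ring_nf
  positivity

lemma Nm_W {t : ℝ} (ht : |t| ≤ 2) (n j : ℕ) :
    Nm (W t n j) ≤ (1/3)^n * (6/((j+1)*(j+2)*(j+3))) := by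
  induction n with
  | zero =>
    induction j with
    | zero => simp [W, Nm_one]; norm_num
    | succ j ih =>
      rw [W_succ_j, mul_assoc, zero_add]
      refine (Nm_mul_le ih (Nm_ratio_j ht j)).trans (le_of_eq ?_)
      push_cast; field_simp; ring
  | succ n ih =>
    rw [W_succ_n, mul_assoc, mul_assoc, ← mul_assoc (aN t n)]
    refine (Nm_mul_le ih (Nm_ratio_n ht n j)).trans (le_of_eq ?_)
    ring

noncomputable def c0 (n j : ℝ) : ℝ := 20*n^3+24*n^2*j+66*n^2+8*n*j^2+52*n*j+72*n+8*j^2+28*j+26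
noncomputable def c1 (n j : ℝ) : ℝ := 2*(30*n^2+24*n*j+67*n+4*j^2+26*j+37)
noncomputable def c2 (t n j : ℝ) : ℝ := 4*(-2*n*t^2+4*n*t+12*n+6*j-2*t^2+5*t+13)
noncomputable def c3 (t : ℝ) : ℝ := 8*(-t^2+t+2)

lemma P8_eq (t : ℝ) (n j : ℕ) :
    P8 t n j = C (c0 n j) + C (c1 n j) * X + C (c2 t n j) * X^2 + C (c3 t) * X^3 := by
  unfold P8 Pp c0 c1 c2 c3
  simp only [map_add, map_mul, map_sub, map_neg, map_one, map_ofNat, map_pow]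
  ring

lemma coeff_cubic (a b c d : ℝ) : coeff 0 (C a + C b * X + C c * X^2 + C d * X^3) = a ∧
    coeff 1 (C a + C b * X + C c * X^2 + C d * X^3) = b ∧
    coeff 2 (C a + C b * X + C c * X^2 + C d * X^3) = c ∧
    coeff 3 (C a + C b * X + C c * X^2 + C d * X^3) = d := by
  refine ⟨?_, ?_, ?_, ?_⟩ <;>
  simp [coeff_C, coeff_X, coeff_X_pow]

lemma Nm_P8 {t : ℝ} (ht : |t| ≤ 2) (n j : ℕ) : Nm (P8 t n j) ≤ 1000 * (n+1)^3 * (j+1)^2 := by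
  obtain ⟨t1, t2⟩ := abs_le.mp ht
  have ht2 : t^2 ≤ 4 := by nlinarith
  have ht2' : 0 ≤ t^2 := by positivity
  obtain ⟨e0, e1, e2, e3⟩ := coeff_cubic (c0 n j) (c1 n j) (c2 t n j) (c3 t)
  rw [P8_eq]; unfold Nm; rw [e0, e1, e2, e3]
  have hn : (0:ℝ) ≤ n := by positivity
  have hj : (0:ℝ) ≤ j := by positivity
  generalize (n:ℝ) = x at *
  generalize (j:ℝ) = y at *
  have k0 : |c0 x y| = c0 x y := abs_of_nonneg (by unfold c0; positivity)
  have k1 : |c1 x y| = c1 x y := abs_of_nonneg (by unfold c1; positivity)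
  have k2 : |c2 t x y| ≤ 4*(28*x+6*y+31) := by
    unfold c2; rw [abs_le]; constructor <;> nlinarith
  have k3 : |c3 t| ≤ 64 := by unfold c3; rw [abs_le]; constructor <;> nlinarith
  have : c0 x y + c1 x y + 4*(28*x+6*y+31) + 64 ≤ 1000 * (x+1)^3 * (y+1)^2 := by
    unfold c0 c1
    rw [← sub_nonneg]; ring_nf; positivity
  have p1 : 0 ≤ c1 x y := by unfold c1; positivity
  have p2 : 0 ≤ |c2 t x y| := abs_nonneg _
  have p3 : 0 ≤ |c3 t| := abs_nonneg _
  rw [k0, k1]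
  linarith

lemma Nm_hh {t : ℝ} (ht : |t| ≤ 2) (n j : ℕ) :
    Nm (hh t n j) ≤ 12000 * ((n+1)^3 * (1/3)^n) * (1/(j+1)) := by
  have hn : (0:ℝ) ≤ n := by positivity
  have hj : (0:ℝ) ≤ j := by positivity
  have h1 : Nm (aI n) ≤ 2 := by
    unfold aI
    refine (Nm_mul_le (x := 3/2) (y := 4/3) (Nm_I_le' (by norm_num) (by linarith) (by linarith))
      (Nm_I_le' (by norm_num) (by linarith) (by linarith))).trans (by norm_num)
  unfold hh
  refine (Nm_mul_le (Nm_mul_le (Nm_P8 ht n j) (Nm_W ht n j)) h1).trans ?_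
  have : ((j:ℝ)+1)^2 * (6/((j+1)*(j+2)*(j+3))) ≤ 6 * (1/(j+1)) := by
    rw [mul_div_assoc', mul_one_div, div_le_div_iff₀ (by positivity) (by positivity)]
    rw [← sub_nonneg]; ring_nf; positivity
  calc _ = 2000 * ((n+1)^3 * (1/3)^n) * (((j:ℝ)+1)^2 * (6/((j+1)*(j+2)*(j+3)))) := by ring
    _ ≤ 2000 * ((n+1)^3 * (1/3)^n) * (6 * (1/(j+1))) := by gcongr
    _ = _ := by ring

lemma Nm_gg {t : ℝ} (ht : |t| ≤ 2) (n j : ℕ) :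
    Nm (gg t n j) ≤ 4*(4*j+2*n+6) * (1/3)^n := by
  have hn : (0:ℝ) ≤ n := by positivity
  have hj : (0:ℝ) ≤ j := by positivity
  have h4 : Nm (4 : PowerSeries ℝ) ≤ 4 := by
    rw [show (4 : PowerSeries ℝ) = C 4 from (map_ofNat C 4).symm, Nm_C]; norm_num
  unfold gg
  refine (Nm_mul_le (Nm_mul_le h4 (Nm_L_le (by norm_num) (by linarith))) (Nm_W ht n j)).trans ?_
  have : 6/(((j:ℝ)+1)*(j+2)*(j+3)) ≤ 1 := by
    rw [div_le_one (by positivity), ← sub_nonneg]; ring_nf; positivity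
  calc _ ≤ 4 * (4*(j:ℝ)+2*n+5+1/125) * ((1/3)^n * 1) := by gcongr
    _ ≤ 4 * (4*(j:ℝ)+2*n+6) * ((1/3)^n * 1) := by
        apply mul_le_mul_of_nonneg_right _ (by positivity)
        linarith
    _ = _ := by ring

lemma tendsto_coeff_of_Nm {f : ℕ → PowerSeries ℝ} (h : Tendsto (fun M => Nm (f M)) atTop (𝓝 0))
    {i : ℕ} (hi : i < 4) : Tendsto (fun M => coeff i (f M)) atTop (𝓝 0) := by
  apply squeeze_zero_norm (a := fun M => 1000^3 * Nm (f M))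
  · intro M; exact coeff_le_Nm _ hi
  · simpa using h.const_mul (1000^3)

theorem main_limit {t : ℝ} (ht : |t| ≤ 2) :
    Tendsto (fun M => Nm (∑ n ∈ range M, hh t n 0 - ∑ j ∈ range M, gg t 0 j)) atTop (𝓝 0) := by
  have hs : Summable (fun n : ℕ => ((n:ℝ)+1)^3 * (1/3)^n) := by
    have := summable_pow_mul_geometric_of_norm_lt_one 3 (r := (1/3:ℝ)) (by norm_num)
    have := ((summable_nat_add_iff 1).mpr this).mul_left 3
    refine this.congr fun n => ?_
    push_cast; ring
  set K := ∑' n : ℕ, ((n:ℝ)+1)^3 * (1/3)^n with hK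
  have hb : ∀ M, Nm (∑ n ∈ range M, hh t n 0 - ∑ j ∈ range M, gg t 0 j) ≤
      12000 * K * (1/((M:ℝ)+1)) + (24 * ((M:ℝ)^2 * (1/3)^M) + 24 * ((M:ℝ)^1 * (1/3)^M)) := by
    intro M
    rw [wz_rect, sub_eq_add_neg]
    refine (Nm_add _ _).trans ?_
    rw [Nm_neg]
    refine add_le_add ?_ ?_
    · refine (Nm_sum _ _).trans ?_
      refine (sum_le_sum fun n _ => Nm_hh ht n M).trans ?_
      rw [← sum_mul, ← mul_sum]
      gcongr
      exact hs.sum_le_tsum _ fun n _ => by positivity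
    · refine (Nm_sum _ _).trans ?_
      refine (sum_le_card_nsmul _ _ (4*(6*(M:ℝ)+6) * (1/3)^M) ?_).trans ?_
      · intro j hj
        refine (Nm_gg ht M j).trans ?_
        have : (j:ℝ) ≤ M := by exact_mod_cast (mem_range.mp hj).le
        gcongr 4 * ?_ * _
        linarith
      · rw [card_range, nsmul_eq_mul]
        apply le_of_eq; ring
  refine squeeze_zero (fun M => Nm_nonneg _) hb ?_
  have l1 := (tendsto_one_div_add_atTop_nhds_zero_nat (𝕜 := ℝ)).const_mul (12000*K)
  have l2 := (tendsto_pow_const_mul_const_pow_of_abs_lt_one 2 (r := (1/3:ℝ)) (by rw [abs_lt]; norm_num)).const_mul 24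
  have l3 := (tendsto_pow_const_mul_const_pow_of_abs_lt_one 1 (r := (1/3:ℝ)) (by rw [abs_lt]; norm_num)).const_mul 24
  simpa using l1.add (l2.add l3)

end S7

open Filter Topology
namespace S7
open PowerSeries Finset

noncomputable def K0 (t : ℝ) : PowerSeries ℝ :=
  L 1 (-2*t) * I 1 (4-2*t) * I 2 (4-2*t) * I 3 (4-2*t) * I 1 (t+1) * I 3 (2*t-2)

/-- log coefficients of `m + α X` -/
noncomputable def lam (m α : ℝ) (k : ℕ) : ℝ := -(-α/m)^k/k

lemma LJ_L' {m : ℝ} (α : ℝ) (hm : m ≠ 0) : LJ (L m α) m (lam m α) := LJ_L α hm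
lemma LJ_I' {m : ℝ} (α : ℝ) (hm : m ≠ 0) : LJ (I m α) (1/m) (fun k => -lam m α k) := by
  have := LJ_I α hm
  simp only [lam]
  convert this using 2
  ring

lemma LJ.congr {f : PowerSeries ℝ} {c d : ℝ} {p q : ℕ → ℝ} (hf : LJ f c p) (hc : c = d)
    (hp : ∀ k, p k = q k) : LJ f d q := by
  obtain rfl : p = q := funext hp
  subst hc; exact hf

noncomputable def rat (t : ℝ) (i : ℕ) : PowerSeries ℝ := aN t i * aI i * dI t i
noncomputable def prat (t : ℝ) (n : ℝ) (k : ℕ) : ℝ :=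
  lam (2*n+1) 4 k + lam (n+1) 2 k + lam (n+1) (2*t-1) k + lam (n+1) (3-2*t) k
   - lam (2*n+1) 2 k - lam (n+1) 1 k - lam (2*n+4) (4-2*t) k - lam (2*n+5) (4-2*t) k
   - lam (n+2) (t+1) k - lam (2*n+5) (2*t-2) k
noncomputable def crat (n : ℝ) : ℝ := -((n+1)^3*(2*n+3))/(2*(n+2)^2*(2*n+5)^2)
noncomputable def pK (t : ℝ) (k : ℕ) : ℝ :=
  lam 1 (-2*t) k - lam 1 (4-2*t) k - lam 2 (4-2*t) k - lam 3 (4-2*t) k - lam 1 (t+1) k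
    - lam 3 (2*t-2) k

lemma LJ_rat (t : ℝ) (n : ℕ) : LJ (rat t n) (crat n) (prat t n) := by
  have a1 : (2*(n:ℝ)+1) ≠ 0 := by positivity
  have a2 : ((n:ℝ)+1) ≠ 0 := by positivity
  have a3 : (2*(n:ℝ)+4) ≠ 0 := by positivity
  have a4 : (2*(n:ℝ)+5) ≠ 0 := by positivity
  have a5 : ((n:ℝ)+2) ≠ 0 := by positivity
  have := (((LJ_C (-(((n:ℝ)+1)*(2*n+3)))).mul ((((LJ_L' 4 a1).mul (LJ_L' 2 a2)).mul (LJ_L' (2*t-1) a2)).mul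
    (LJ_L' (3-2*t) a2))).mul ((LJ_I' 2 a1).mul (LJ_I' 1 a2))).mul
    ((((LJ_I' (4-2*t) a3).mul (LJ_I' (4-2*t) a4)).mul (LJ_I' (t+1) a5)).mul (LJ_I' (2*t-2) a4))
  refine LJ.congr this ?_ ?_
  · unfold crat; rw [show (2*(n:ℝ)+4) = 2*(n+2) by ring]; field_simp
  · intro k; unfold prat; ring

lemma LJ_K0 (t : ℝ) : LJ (K0 t) (1/18) (pK t) := by
  have a1 : (1:ℝ) ≠ 0 := by norm_num
  have a2 : (2:ℝ) ≠ 0 := by norm_num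
  have a3 : (3:ℝ) ≠ 0 := by norm_num
  have := ((((((LJ_L' (-2*t) a1)).mul (LJ_I' (4-2*t) a1)).mul (LJ_I' (4-2*t) a2)).mul (LJ_I' (4-2*t) a3)).mul
    (LJ_I' (t+1) a1)).mul (LJ_I' (2*t-2) a3)
  refine LJ.congr this (by norm_num) ?_
  intro k; unfold pK; ring

noncomputable def sig (n : ℕ) : ℝ := (-1)^n / ((2*n).choose n : ℝ)

lemma sig_zero : sig 0 = 1 := by simp [sig]
lemma sig_succ (n : ℕ) : sig (n+1) = - ((n+1)/(2*(2*n+1))) * sig n := by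
  have h := Nat.succ_mul_centralBinom_succ n
  have h' : ((n:ℝ)+1) * ((2*(n+1)).choose (n+1) : ℝ) = 2*(2*n+1) * ((2*n).choose n : ℝ) := by
    simp only [Nat.centralBinom] at h
    exact_mod_cast h
  have p1 : (0:ℝ) < ((2*n).choose n : ℝ) := by exact_mod_cast Nat.centralBinom_pos n
  have p2 : (0:ℝ) < ((2*(n+1)).choose (n+1) : ℝ) := by exact_mod_cast Nat.centralBinom_pos (n+1)
  unfold sig
  field_simp
  rw [pow_succ]
  linear_combination (-1)^n * (-1) * (-h')

lemma prod_crat (n : ℕ) : 1/18 * ∏ i ∈ range n, crat (i:ℕ) = sig n / (2*(n+1)^2*(2*n+1)*(2*n+3)^2) := by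
  induction n with
  | zero => simp [sig_zero]; norm_num
  | succ n ih =>
    rw [prod_range_succ, ← mul_assoc, ih, sig_succ]
    unfold crat; push_cast
    field_simp
    ring

lemma H_succ (s n : ℕ) : H s (n+1) = H s n + 1/((n:ℝ)+1)^s := by
  unfold H; rw [sum_range_succ]

lemma H_zero (s : ℕ) : H s 0 = 0 := by simp [H]

lemma H_two_succ (s n : ℕ) : H s (2*(n+1)) = H s (2*n) + 1/(2*(n:ℝ)+1)^s + 1/(2*(n:ℝ)+2)^s := by
  rw [show 2*(n+1) = 2*n+1+1 by ring, H_succ, H_succ]; push_cast; ring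

/-- the non-homogeneous remainder -/
noncomputable def prem (t n : ℝ) (k : ℕ) : ℝ :=
  lam 1 (-2*t) k + lam 1 (2*t-2) k - lam (2*n+1) (4-2*t) k - lam (2*n+2) (4-2*t) k - lam (2*n+3) (4-2*t) k
    - lam (n+1) (t+1) k - lam (2*n+1) (2*t-2) k - lam (2*n+3) (2*t-2) k

lemma psum1 (t : ℝ) (n : ℕ) : pK t 1 + ∑ i ∈ range n, prat t i 1 = prem t n 1 := by
  induction n with
  | zero => simp [pK, prem]; ring
  | succ n ih =>
    rw [sum_range_succ, ← add_assoc, ih]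
    unfold prem prat lam; push_cast
    field_simp; ring

lemma psum2 (t : ℝ) (n : ℕ) : pK t 2 + ∑ i ∈ range n, prat t i 2 = prem t n 2 +
    4 * (t^2*(H 2 (2*n) - H 2 n) + t*(-3*H 2 (2*n) + 5/2*H 2 n) + (H 2 (2*n) - 5/4*H 2 n)) := by
  induction n with
  | zero => simp [pK, prem, H_zero]; ring
  | succ n ih =>
    rw [sum_range_succ, ← add_assoc, ih, H_two_succ, H_succ]
    unfold prem prat lam; push_cast
    field_simp; ring

lemma psum3 (t : ℝ) (n : ℕ) : pK t 3 + ∑ i ∈ range n, prat t i 3 = prem t n 3 +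
    8 * ((3*t-t^2)*H 3 (2*n) + (3/4*t^2-2*t+1) * H 3 n) := by
  induction n with
  | zero => simp [pK, prem, H_zero]; ring
  | succ n ih =>
    rw [sum_range_succ, ← add_assoc, ih, H_two_succ, H_succ]
    unfold prem prat lam; push_cast
    field_simp; ring

noncomputable def ct (t : ℝ) (n : ℕ) : ℝ := coeff 3 (K0 t * hh t n 0)

lemma ct_eq (t : ℝ) (n : ℕ) : ∃ p1 p2 p3 : ℝ,
    p1 = prem t n 1 - lam (2*n+1) 2 1 - lam (n+1) 1 1 ∧
    p2 = prem t n 2 - lam (2*n+1) 2 2 - lam (n+1) 1 2 +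
      4 * (t^2*(H 2 (2*n) - H 2 n) + t*(-3*H 2 (2*n) + 5/2*H 2 n) + (H 2 (2*n) - 5/4*H 2 n)) ∧
    p3 = prem t n 3 - lam (2*n+1) 2 3 - lam (n+1) 1 3 +
      8 * ((3*t-t^2)*H 3 (2*n) + (3/4*t^2-2*t+1) * H 3 n) ∧
    ct t n = sig n / (2*(n+1)^3*(2*n+1)^2*(2*n+3)^2) *
      (c0 n 0 * (p3 + p1*p2 + p1^3/6) + c1 n 0 * (p2 + p1^2/2) + c2 t n 0 * p1 + c3 t) := by
  refine ⟨_, _, _, rfl, rfl, rfl, ?_⟩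
  have a1 : (2*(n:ℝ)+1) ≠ 0 := by positivity
  have a2 : ((n:ℝ)+1) ≠ 0 := by positivity
  have key := ((LJ_K0 t).mul (LJ_prod (LJ_rat t) n)).mul ((LJ_I' 2 a1).mul (LJ_I' 1 a2))
  have e : K0 t * hh t n 0 = P8 t n 0 * (K0 t * (∏ i ∈ range n, rat t i) * (I (2*n+1) 2 * I (n+1) 1)) := by
    unfold hh W rat aI; simp only [range_zero, prod_empty, add_zero, prod_mul_distrib]; ring
  obtain ⟨e0, e1, e2, e3⟩ := coeff_cubic (c0 n (0:ℕ)) (c1 n (0:ℕ)) (c2 t n (0:ℕ)) (c3 t)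
  unfold ct
  rw [e, coeff3_mul, P8_eq, e0, e1, e2, e3, key.h0, key.h1, key.h2, key.h3, prod_crat, psum1, psum2, psum3]
  push_cast
  field_simp
  ring

end S7

open Filter Topology
namespace S7
open PowerSeries Finset

noncomputable def GG (n : ℕ) : ℝ :=
  sig n * (-(2*H 2 (2*n) + 3/2*H 2 n)/(2*n+1)^3 - 10/(2*n+1)^5)

lemma D_n (n : ℕ) : 1/4 * ct 2 n + 3/4 * ct (-1) n + 5/4 * ct 1 n - 5/2 * ct 0 n =
    -10 * (sig n / (2*(n+1)^2*(2*n+1)) * (H 2 (2*n+1) + 3/4 * H 2 n - 27/4/(n+1)^2))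
      + 8 * (GG (n+1) - GG n) := by
  obtain ⟨x1, x2, x3, hx1, hx2, hx3, hx⟩ := ct_eq 2 n
  obtain ⟨y1, y2, y3, hy1, hy2, hy3, hy⟩ := ct_eq (-1) n
  obtain ⟨z1, z2, z3, hz1, hz2, hz3, hz⟩ := ct_eq 1 n
  obtain ⟨w1, w2, w3, hw1, hw2, hw3, hw⟩ := ct_eq 0 n
  rw [hx, hy, hz, hw]
  unfold GG
  rw [sig_succ, H_two_succ, H_succ, H_succ]
  subst hx1 hx2 hx3 hy1 hy2 hy3 hz1 hz2 hz3 hw1 hw2 hw3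
  unfold prem lam c0 c1 c2 c3
  push_cast
  generalize H 2 (2*n) = A
  generalize H 2 n = B
  generalize H 3 (2*n) = A3
  generalize H 3 n = B3
  generalize sig n = s
  have hn : (0:ℝ) ≤ n := by positivity
  generalize (n:ℝ) = x at *
  have e1 : 2*(x+1)+1 = 2*x+3 := by ring
  have e2 : 2*x+2 = 2*(x+1) := by ring
  rw [e1, e2]
  have a1 : 2*x+1 ≠ 0 := by positivity
  have a2 : x+1 ≠ 0 := by positivity
  have a3 : 2*x+3 ≠ 0 := by positivity
  norm_num
  field_simp
  ring

end S7

open Filter Topology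
namespace S7
open PowerSeries Finset

noncomputable def uA (β : ℝ) (m : ℕ) : PowerSeries ℝ :=
  L (2*m+3) 0 * L (m+1) (3-2*β) * L (m+1) (2+2*β)
noncomputable def uB (β : ℝ) (j : ℕ) : PowerSeries ℝ :=
  L (j+1) (2*β) * L (j+1) (1-2*β) * L (2*j+3) (-4)
noncomputable def uE (β : ℝ) (s : ℕ) : PowerSeries ℝ :=
  L (2*s+3) 2 * (I (2*s+5) (2-4*β) * I (2*s+5) (4*β) * I (s+2) 3)
noncomputable def uD (β : ℝ) (s : ℕ) : PowerSeries ℝ :=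
  L (2*s+5) (2-4*β) * L (2*s+5) (4*β) * L (s+2) 3
noncomputable def V (β : ℝ) (m j : ℕ) : PowerSeries ℝ :=
  (∏ i ∈ range m, (uA β i * I (i+1) 2)) * (∏ i ∈ range j, (uB β i * I (i+2) 0)) *
    ∏ i ∈ range (m+j), uE β i
noncomputable def FF (β : ℝ) (m j : ℕ) : PowerSeries ℝ := L (2*m+4*j+5) 2 * V β m j
noncomputable def RR (β : ℝ) (m j : ℕ) : PowerSeries ℝ :=
  L (j+1) 0 * L (2*j+4*m+5) 6 * I (m+1) 2 * V β m j

lemma V_succ_j (β : ℝ) (m j : ℕ) : V β m (j+1) = V β m j * (uB β j * I (j+2) 0 * uE β (m+j)) := by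
  unfold V; rw [← add_assoc, prod_range_succ, prod_range_succ]; ring

lemma V_succ_m (β : ℝ) (m j : ℕ) : V β (m+1) j = V β m j * (uA β m * I (m+1) 2 * uE β (m+j)) := by
  unfold V; rw [add_right_comm, prod_range_succ, prod_range_succ]; ring

lemma uD_mul' (β : ℝ) (s : ℕ) :
    uD β s * (I (2*s+5) (2-4*β) * I (2*s+5) (4*β) * I (s+2) 3) = 1 := by
  have h1 := L_mul_I (m := 2*(s:ℝ)+5) (2-4*β) (by positivity)
  have h2 := L_mul_I (m := 2*(s:ℝ)+5) (4*β) (by positivity)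
  have h3 := L_mul_I (m := (s:ℝ)+2) 3 (by positivity)
  unfold uD
  calc _ = ((L (2*(s:ℝ)+5) (2-4*β) * I (2*s+5) (2-4*β)) * (L (2*(s:ℝ)+5) (4*β) * I (2*s+5) (4*β)) * (L ((s:ℝ)+2) 3 * I (s+2) 3)) := by ring
    _ = _ := by rw [h1, h2, h3]; ring

lemma poly_id2 (β : ℝ) (m j : ℕ) :
    L (2*m+4*j+5) 2 * L (m+1) 2 * uD β (m+j) - L (2*m+4*j+7) 2 * uA β m * L (2*(m+j:ℕ)+3) 2
     + L (2*j+4*m+7) 6 * uB β j * L (2*(m+j:ℕ)+3) 2 - L (j+1) 0 * L (2*j+4*m+5) 6 * uD β (m+j) = 0 := by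
  unfold uD uA uB L
  push_cast
  simp only [map_add, map_mul, map_sub, map_neg, map_one, map_ofNat, map_zero]
  generalize C (m:ℝ) = ν
  generalize C (j:ℝ) = μ
  generalize C β = τ
  generalize (X : PowerSeries ℝ) = x
  ring

lemma wz2 (β : ℝ) (m j : ℕ) : FF β m j - FF β (m+1) j = RR β m j - RR β m (j+1) := by
  have h1 := L_mul_I (m := (m:ℝ)+1) 2 (by positivity)
  have h2 := L_mul_I (m := (j:ℝ)+2) 0 (by positivity)
  have h3 := poly_id2 β m j
  have hu : ∃ J, uE β (m+j) = L (2*(m+j:ℕ)+3) 2 * J ∧ uD β (m+j) * J = 1 := by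
    refine ⟨_, rfl, ?_⟩
    exact uD_mul' β (m+j)
  obtain ⟨J, hJ, hJ1⟩ := hu
  unfold FF RR
  rw [V_succ_j, V_succ_m, hJ]
  have e1 : (2*((m+1:ℕ):ℝ)+4*j+5) = 2*m+4*j+7 := by push_cast; ring
  have e2 : (2*((j+1:ℕ):ℝ)+4*m+5) = 2*j+4*m+7 := by push_cast; ring
  have e3 : (((j+1:ℕ):ℝ)+1) = j+2 := by push_cast; ring
  rw [e1, e2, e3]
  linear_combination (V β m j * J * I (m+1) 2) * h3
    - (L (2*m+4*j+5) 2 * V β m j * L (m+1) 2 * I (m+1) 2 - L (j+1) 0 * L (2*j+4*m+5) 6 * I (m+1) 2 * V β m j) * hJ1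
    - (L (2*m+4*j+5) 2 * V β m j) * h1
    + (L (2*j+4*m+7) 6 * I (m+1) 2 * V β m j * uB β j * L (2*(m+j:ℕ)+3) 2 * J) * h2

lemma wz2_rect (β : ℝ) (M K : ℕ) :
    ∑ j ∈ range K, FF β 0 j - ∑ m ∈ range M, RR β m 0
      = ∑ j ∈ range K, FF β M j - ∑ m ∈ range M, RR β m K := by
  have h1 : ∀ m, RR β m 0 - RR β m K = ∑ j ∈ range K, (FF β m j - FF β (m+1) j) := by
    intro m
    rw [← Finset.sum_range_sub' (fun j => RR β m j)]
    exact (sum_congr rfl fun j _ => (wz2 β m j)).symm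
  have h2 : ∑ m ∈ range M, (RR β m 0 - RR β m K) = ∑ j ∈ range K, (FF β 0 j - FF β M j) := by
    rw [sum_congr rfl fun n _ => h1 n, sum_comm]
    exact sum_congr rfl fun j _ => Finset.sum_range_sub' (fun n => FF β n j) M
  rw [sum_sub_distrib, sum_sub_distrib] at h2
  linear_combination -h2

lemma Nm_r1 {β : ℝ} (hβ : |β| ≤ 1) (m j : ℕ) :
    Nm (uA β m * I (m+1) 2 * uE β (m+j)) ≤ (m+1)/(m+3) := by
  obtain ⟨t1, t2⟩ := abs_le.mp hβ
  have hm : (0:ℝ) ≤ m := by positivity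
  have hj : (0:ℝ) ≤ j := by positivity
  have b1 : |3-2*β| ≤ 8 := by rw [abs_le]; constructor <;> linarith
  have b2 : |2+2*β| ≤ 8 := by rw [abs_le]; constructor <;> linarith
  have b3 : |2-4*β| ≤ 8 := by rw [abs_le]; constructor <;> linarith
  have b4 : |4*β| ≤ 8 := by rw [abs_le]; constructor <;> linarith
  have b6 : |(3:ℝ)| ≤ 8 := by norm_num
  have b7 : |(2:ℝ)| ≤ 8 := by norm_num
  have b0 : Nm (L (2*(m:ℝ)+3) 0) ≤ 2*m+3 := by rw [Nm_L _ (by linarith)]; simp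
  unfold uA uE
  push_cast
  refine (Nm_mul_le (Nm_mul_le (Nm_mul_le (Nm_mul_le b0 (Nm_L_le b1 (by linarith))) (Nm_L_le b2 (by linarith)))
    (Nm_I_le b7 (by linarith))) (Nm_mul_le (Nm_L_le b7 (by linarith)) (Nm_mul_le (Nm_mul_le
    (Nm_I_le b3 (by linarith)) (Nm_I_le b4 (by linarith))) (Nm_I_le b6 (by linarith))))).trans ?_
  generalize (m:ℝ) = x at *
  generalize (j:ℝ) = y at *
  have q1 : 0 < x+1-1/125 := by linarith
  have q2 : 0 < 2*(x+y)+5-1/125 := by linarith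
  have q3 : 0 < x+y+2-1/125 := by linarith
  have : (2*x+3)*(x+1+1/125)*(x+1+1/125)*(1/(x+1-1/125)) * ((2*(x+y)+3+1/125) * (1/(2*(x+y)+5-1/125)
    * (1/(2*(x+y)+5-1/125)) * (1/(x+y+2-1/125)))) =
    ((2*x+3)*(x+1+1/125)*(x+1+1/125) * (2*(x+y)+3+1/125))/((x+1-1/125)*((2*(x+y)+5-1/125)
    * (2*(x+y)+5-1/125) * (x+y+2-1/125))) := by
    simp only [div_eq_mul_inv, mul_inv, one_mul]; ring
  rw [this, div_le_div_iff₀ (by positivity) (by positivity), ← sub_nonneg]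
  ring_nf
  positivity

lemma Nm_r2 {β : ℝ} (hβ : |β| ≤ 1) (j : ℕ) :
    Nm (uB β j * I (j+2) 0 * uE β j) ≤ (j+1)/(j+4) := by
  obtain ⟨t1, t2⟩ := abs_le.mp hβ
  have hj : (0:ℝ) ≤ j := by positivity
  have b1 : |1-2*β| ≤ 8 := by rw [abs_le]; constructor <;> linarith
  have b2 : |2*β| ≤ 8 := by rw [abs_le]; constructor <;> linarith
  have b3 : |2-4*β| ≤ 8 := by rw [abs_le]; constructor <;> linarith
  have b4 : |4*β| ≤ 8 := by rw [abs_le]; constructor <;> linarith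
  have b5 : |(-4:ℝ)| ≤ 8 := by norm_num
  have b6 : |(3:ℝ)| ≤ 8 := by norm_num
  have b7 : |(2:ℝ)| ≤ 8 := by norm_num
  have b8 : |(0:ℝ)| ≤ 8 := by norm_num
  unfold uB uE
  refine (Nm_mul_le (Nm_mul_le (Nm_mul_le (Nm_mul_le (Nm_L_le b2 (by linarith)) (Nm_L_le b1 (by linarith))) (Nm_L_le b5 (by linarith)))
    (Nm_I_le b8 (by linarith))) (Nm_mul_le (Nm_L_le b7 (by linarith)) (Nm_mul_le (Nm_mul_le
    (Nm_I_le b3 (by linarith)) (Nm_I_le b4 (by linarith))) (Nm_I_le b6 (by linarith))))).trans ?_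
  generalize (j:ℝ) = y at *
  have q2 : 0 < 2*y+5-1/125 := by linarith
  have q3 : 0 < y+2-1/125 := by linarith
  have : (y+1+1/125)*(y+1+1/125)*(2*y+3+1/125)*(1/(y+2-1/125)) * ((2*y+3+1/125) * (1/(2*y+5-1/125)
    * (1/(2*y+5-1/125)) * (1/(y+2-1/125)))) =
    ((y+1+1/125)*(y+1+1/125)*(2*y+3+1/125) * (2*y+3+1/125))/((y+2-1/125)*((2*y+5-1/125)
    * (2*y+5-1/125) * (y+2-1/125))) := by
    simp only [div_eq_mul_inv, mul_inv, one_mul]; ring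
  rw [this, div_le_div_iff₀ (by positivity) (by positivity), ← sub_nonneg]
  ring_nf
  positivity

lemma Nm_V {β : ℝ} (hβ : |β| ≤ 1) (m j : ℕ) :
    Nm (V β m j) ≤ 2/((m+1)*(m+2)) * (6/((j+1)*(j+2)*(j+3))) := by
  induction m with
  | zero =>
    induction j with
    | zero => simp [V, Nm_one]; norm_num
    | succ j ih =>
      rw [V_succ_j, zero_add]
      refine (Nm_mul_le ih (Nm_r2 hβ j)).trans (le_of_eq ?_)
      push_cast; field_simp; ring
  | succ n ih =>
    rw [V_succ_m]
    refine (Nm_mul_le ih (Nm_r1 hβ n j)).trans (le_of_eq ?_)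
    push_cast; field_simp; ring

lemma sum_tele (M : ℕ) : ∑ j ∈ range M, 1/(((j:ℝ)+1)*(j+2)) ≤ 1 := by
  have : ∀ M : ℕ, ∑ j ∈ range M, 1/(((j:ℝ)+1)*(j+2)) = 1 - 1/((M:ℝ)+1) := by
    intro M
    induction M with
    | zero => simp
    | succ M ih => rw [sum_range_succ, ih]; push_cast; field_simp; ring
  rw [this]
  have : 0 ≤ 1/((M:ℝ)+1) := by positivity
  linarith

theorem limit2 {β : ℝ} (hβ : |β| ≤ 1) :
    Tendsto (fun M => Nm (∑ j ∈ range M, FF β 0 j - ∑ m ∈ range M, RR β m 0)) atTop (𝓝 0) := by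
  have hb : ∀ M, Nm (∑ j ∈ range M, FF β 0 j - ∑ m ∈ range M, RR β m 0) ≤
      72 * (1/((M:ℝ)+1)) + 288 * (1/((M:ℝ)+1)) := by
    intro M
    have hM : (0:ℝ) ≤ M := by positivity
    rw [wz2_rect, sub_eq_add_neg]
    refine (Nm_add _ _).trans ?_
    rw [Nm_neg]
    refine add_le_add ?_ ?_
    · refine (Nm_sum _ _).trans ?_
      have : ∀ j ∈ range M, Nm (FF β M j) ≤ (72 * (1/((M:ℝ)+1))) * (1/(((j:ℝ)+1)*(j+2))) := by
        intro j _
        have hj : (0:ℝ) ≤ j := by positivity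
        refine (Nm_mul_le (Nm_L_le (by norm_num) (by linarith)) (Nm_V hβ M j)).trans ?_
        have h1 : 2*(M:ℝ)+4*j+5+1/125 ≤ 6*((M+2)*(j+3)) := by nlinarith
        calc _ ≤ 6*(((M:ℝ)+2)*(j+3)) * (2/((M+1)*(M+2)) * (6/((j+1)*(j+2)*(j+3)))) := by gcongr
          _ = _ := by field_simp; norm_num
      refine (sum_le_sum this).trans ?_
      rw [← mul_sum]
      exact mul_le_of_le_one_right (by positivity) (sum_tele M)
    · refine (Nm_sum _ _).trans ?_
      have : ∀ m ∈ range M, Nm (RR β m M) ≤ (288 * (1/((M:ℝ)+1))) * (1/(((m:ℝ)+1)*(m+2))) := by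
        intro m _
        have hm : (0:ℝ) ≤ m := by positivity
        have h0 : Nm (L ((M:ℝ)+1) 0) ≤ M+1 := by rw [Nm_L _ (by linarith)]; simp
        have h2 : Nm (I ((m:ℝ)+1) 2) ≤ 2/(m+1) := by
          apply Nm_I_le' (by norm_num) (by linarith)
          rw [div_mul_eq_mul_div, le_div_iff₀ (by positivity)]; linarith
        refine (Nm_mul_le (Nm_mul_le (Nm_mul_le h0 (Nm_L_le (by norm_num) (by linarith))) h2) (Nm_V hβ m M)).trans ?_
        have h1 : 2*(M:ℝ)+4*m+5+1/125 ≤ 12*((M+2)*(m+1)) := by nlinarith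
        calc _ ≤ ((M:ℝ)+1)*(12*((M+2)*(m+1)))*(2/(m+1)) * (2/((m+1)*(m+2)) * (6/((M+1)*(M+2)*(M+3)))) := by gcongr
          _ = (288 * (1/((M:ℝ)+3))) * (1/(((m:ℝ)+1)*(m+2))) := by field_simp; norm_num
          _ ≤ _ := by gcongr; norm_num
      refine (sum_le_sum this).trans ?_
      rw [← mul_sum]
      exact mul_le_of_le_one_right (by positivity) (sum_tele M)
  refine squeeze_zero (fun M => Nm_nonneg _) hb ?_
  have l1 := (tendsto_one_div_add_atTop_nhds_zero_nat (𝕜 := ℝ))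
  simpa using (l1.const_mul 72).add (l1.const_mul 288)

end S7

open Filter Topology
namespace S7
open PowerSeries Finset

lemma zsum (k : ℕ) (hk : 2 ≤ k) : Summable (fun n : ℕ => 1/((n:ℝ)+1)^k) := by
  have := (summable_nat_add_iff 1).2 (Real.summable_one_div_nat_pow.2 (by omega : 1 < k))
  simpa using this

lemma zeta_tendsto (k : ℕ) (hk : 2 ≤ k) :
    Tendsto (fun M => ∑ m ∈ range M, 1/((m:ℝ)+1)^k) atTop (𝓝 (zeta k)) :=
  (zsum k hk).hasSum.tendsto_sum_nat

lemma even_odd_sum (f : ℕ → ℝ) (M : ℕ) :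
    ∑ m ∈ range (2*M), f m = ∑ m ∈ range M, f (2*m) + ∑ m ∈ range M, f (2*m+1) := by
  induction M with
  | zero => simp
  | succ M ih => rw [show 2*(M+1) = 2*M+1+1 by ring, sum_range_succ, sum_range_succ, ih,
      sum_range_succ, sum_range_succ]; ring

lemma tendsto_two_mul : Tendsto (fun M : ℕ => 2*M) atTop atTop :=
  tendsto_id.const_mul_atTop' (by norm_num)

lemma odd_tendsto (k : ℕ) (hk : 2 ≤ k) :
    Tendsto (fun M => ∑ m ∈ range M, 1/(2*(m:ℝ)+1)^k) atTop (𝓝 ((1-1/2^k) * zeta k)) := by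
  have h1 := (zeta_tendsto k hk).comp tendsto_two_mul
  have h2 := (zeta_tendsto k hk).const_mul (1/2^k)
  have := h1.sub h2
  rw [show zeta k - 1/2^k * zeta k = (1-1/2^k) * zeta k by ring] at this
  refine this.congr fun M => ?_
  simp only [Function.comp]
  rw [even_odd_sum, mul_sum]
  have : ∑ m ∈ range M, 1/(((2*m+1:ℕ):ℝ)+1)^k = ∑ m ∈ range M, 1/2^k * (1/((m:ℝ)+1)^k) := by
    refine sum_congr rfl fun m _ => ?_
    push_cast
    rw [show (2*(m:ℝ)+1+1) = 2*(m+1) by ring, mul_pow]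
    field_simp
  rw [this]; push_cast; ring

lemma odd_tendsto' (k : ℕ) (hk : 2 ≤ k) :
    Tendsto (fun M => ∑ m ∈ range M, 1/(2*(m:ℝ)+3)^k) atTop (𝓝 ((1-1/2^k) * zeta k - 1)) := by
  have := ((odd_tendsto k hk).comp (tendsto_add_atTop_nat 1)).sub_const 1
  refine this.congr fun M => ?_
  simp only [Function.comp]
  rw [sum_range_succ']
  simp
  refine sum_congr rfl fun m _ => ?_
  congr 2; ring

lemma L_two (m a : ℝ) : L (2*m) (2*a) = C 2 * L m a := by
  unfold L; simp only [map_mul]; ring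
lemma I_two (m a : ℝ) : I (2*m) (2*a) = C (1/2) * I m a := by
  ext i
  rw [coeff_C_mul]
  simp only [I, coeff_mk]
  rw [show -(2*a) = 2*(-a) by ring, mul_pow, mul_pow, pow_succ, pow_succ]
  by_cases h : m = 0
  · simp [h]
  field_simp
lemma C_half : (C (2:ℝ) : PowerSeries ℝ) * C (1/2) = 1 := by
  rw [← map_mul]; norm_num
lemma LI_half (m n a b : ℝ) : L (2*m) (2*a) * I (2*n) (2*b) = L m a * I n b := by
  rw [L_two, I_two]; linear_combination (L m a * I n b) * C_half

lemma gg2 (j : ℕ) : gg 2 0 j = 4 * FF 0 0 j := by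
  have hW : W 2 0 j = V 0 0 j := by
    induction j with
    | zero => simp [W, V]
    | succ j ih =>
      rw [W_succ_j, V_succ_j, ih]
      have h := LI_half ((j:ℝ)+1) (j+2) 0 0
      unfold bN dI uB uE
      norm_num at h ⊢
      have e1 : 2*(j:ℝ)+2 = 2*(j+1) := by ring
      have e2 : 2*(j:ℝ)+4 = 2*(j+2) := by ring
      rw [e1, e2]
      linear_combination (V 0 0 j * L (2 * ↑j + 3) (-4) * L (↑j + 1) 1 * L (2 * ↑j + 3) 2 * I (2 * ↑j + 5) 0 * I (↑j + 2) 3 * I (2 * ↑j + 5) 2) * h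
  unfold gg FF
  rw [hW]; push_cast; ring_nf

lemma ggm1 (j : ℕ) : gg (-1) 0 j = 4 * FF (-1) 0 j := by
  have hW : W (-1) 0 j = V (-1) 0 j := by
    induction j with
    | zero => simp [W, V]
    | succ j ih =>
      rw [W_succ_j, V_succ_j, ih]
      have h := LI_half ((j:ℝ)+1) (j+2) 3 3
      unfold bN dI uB uE
      norm_num at h ⊢
      have e1 : 2*(j:ℝ)+2 = 2*(j+1) := by ring
      have e2 : 2*(j:ℝ)+4 = 2*(j+2) := by ring
      rw [e1, e2]
      linear_combination (V (-1) 0 j * L (2 * ↑j + 3) 2 * L (↑j + 1) (-2) * L (2 * ↑j + 3) (-4) * I (2 * ↑j + 5) 6 * I (↑j + 2) 0 * I (2 * ↑j + 5) (-4)) * h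
  unfold gg FF
  rw [hW]; push_cast; ring_nf

lemma I_one_zero : I 1 0 = 1 := by
  have h := L_mul_I (m := 1) 0 one_ne_zero
  rw [show L 1 0 = 1 by simp [L]] at h
  simpa using h

lemma V2 (m : ℕ) : V 0 m 0 = L 3 0 * L 1 3 * L 3 2 * (I (2*m+3) 0 * I (m+1) 3 * I (2*m+3) 2) := by
  induction m with
  | zero =>
    have h1 := L_mul_I (m := 3) 0 (by norm_num)
    have h2 := L_mul_I (m := 1) 3 (by norm_num)
    have h3 := L_mul_I (m := 3) 2 (by norm_num)
    simp [V]
    calc (1 : PowerSeries ℝ) = (L 3 0 * I 3 0) * (L 1 3 * I 1 3) * (L 3 2 * I 3 2) := by rw [h1, h2, h3]; ring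
      _ = _ := by ring
  | succ m ih =>
    rw [V_succ_m, ih]
    have h1 := L_mul_I (m := 2*(m:ℝ)+3) 0 (by positivity)
    have h2 := L_mul_I (m := (m:ℝ)+1) 3 (by positivity)
    have h3 := L_mul_I (m := 2*(m:ℝ)+3) 2 (by positivity)
    have h4 := L_mul_I (m := (m:ℝ)+1) 2 (by positivity)
    unfold uA uE
    have e1 : 2*((m+1:ℕ):ℝ)+3 = 2*m+5 := by push_cast; ring
    have e2 : ((m+1:ℕ):ℝ)+1 = m+2 := by push_cast; ring
    rw [e1, e2]
    norm_num
    calc _ = (L (2*(m:ℝ)+3) 0 * I (2*m+3) 0) * (L ((m:ℝ)+1) 3 * I (m+1) 3) * (L (2*(m:ℝ)+3) 2 * I (2*m+3) 2) * (L ((m:ℝ)+1) 2 * I (m+1) 2) * (L 3 0 * L 1 3 * L 3 2 * (I (2*m+5) 0 * I (m+2) 3 * I (2*m+5) 2)) := by ring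
      _ = _ := by rw [h1, h2, h3, h4]; ring

lemma q2_term (m : ℕ) : coeff 3 (K0 2 * (4 * RR 0 m 0)) = -130 * (1/((m:ℝ)+1)^5) + 64 * (1/(2*(m:ℝ)+3)^5) := by
  have h1 := L_mul_I (m := 2*(m:ℝ)+3) 0 (by positivity)
  have h2 := L_mul_I (m := (m:ℝ)+1) 3 (by positivity)
  have h3 := L_mul_I (m := 2*(m:ℝ)+3) 2 (by positivity)
  have h4 := L_mul_I (m := (m:ℝ)+1) 2 (by positivity)
  have k1 := L_mul_I (m := 3) 0 (by norm_num)
  have k2 := L_mul_I (m := 1) 3 (by norm_num)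
  have k3 := L_mul_I (m := 3) 2 (by norm_num)
  have hI := I_two 1 0
  rw [I_one_zero] at hI
  norm_num at hI
  have e : K0 2 * (4 * RR 0 m 0) = 2 * L 1 (-4) * L (4*m+5) 6 * I (m+1) 2 * (I (2*m+3) 0 * I (m+1) 3 * I (2*m+3) 2) := by
    unfold K0 RR
    rw [V2]
    norm_num
    rw [show L 1 0 = 1 by simp [L], I_one_zero, hI]
    calc _ = (L 3 0 * I 3 0) * (L 1 3 * I 1 3) * (L 3 2 * I 3 2) * (C 2 * C (1/2)) * (2 * L 1 (-4) * L (4*m+5) 6 * I (m+1) 2 * (I (2*m+3) 0 * I (m+1) 3 * I (2*m+3) 2)) := by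
          rw [show (C (2:ℝ) : PowerSeries ℝ) = 2 from map_ofNat C 2]; ring
      _ = _ := by rw [k1, k2, k3, C_half]; ring
  have e2 : K0 2 * (4 * RR 0 m 0) * X = C 2 * (I (m+1) 2 - I (m+1) 3) + C 4 * (I (2*m+3) 2 - I (2*m+3) 0) := by
    rw [e]
    have hp : 2 * L 1 (-4) * L (4*m+5) 6 * X = C 2 * (L (m+1) 3 - L (m+1) 2) * (L (2*m+3) 2 * L (2*m+3) 0) + C 4 * (L (2*m+3) 0 - L (2*m+3) 2) * (L (m+1) 3 * L (m+1) 2) := by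
      unfold L
      simp only [map_add, map_mul, map_neg, map_one, map_ofNat, map_zero]
      generalize C (m:ℝ) = ν
      ring
    have f1 : I (2*m+3) 2 - I (2*m+3) 0 = (L (2*m+3) 0 - L (2*m+3) 2) * (I (2*m+3) 2 * I (2*m+3) 0) := by
      linear_combination (-I (2*m+3) 2) * h1 + I (2*m+3) 0 * h3
    have f2 : I (m+1) 2 - I (m+1) 3 = (L (m+1) 3 - L (m+1) 2) * (I (m+1) 2 * I (m+1) 3) := by
      linear_combination (-I (m+1) 2) * h2 + I (m+1) 3 * h4
    have h31 : (L (2*m+3) 2 * I (2*m+3) 2) * (L (2*m+3) 0 * I (2*m+3) 0) = 1 := by rw [h3, h1, one_mul]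
    have h24 : (L (m+1) 3 * I (m+1) 3) * (L (m+1) 2 * I (m+1) 2) = 1 := by rw [h2, h4, one_mul]
    rw [f1, f2]
    set i1 := I (2*m+3) 0
    set i2 := I (m+1) 3
    set i3 := I (2*m+3) 2
    set i4 := I (m+1) 2
    linear_combination (i1*i2*i3*i4) * hp + C 2 * (L (m+1) 3 - L (m+1) 2) * i4 * i2 * h31  + C 4 * (L (2*m+3) 0 - L (2*m+3) 2) * i1 * i3 * h24
  have e3 := coeff_succ_mul_X 3 (K0 2 * (4 * RR 0 m 0))
  rw [← e3, e2, map_add, coeff_C_mul, coeff_C_mul, map_sub, map_sub]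
  simp only [I, coeff_mk]
  norm_num
  ring

/-- transfer: limit along `RR` gives limit along `ct` -/
lemma transfer {t β : ℝ} (hβ : |β| ≤ 1) (hg : ∀ j, gg t 0 j = 4 * FF β 0 j) {q : ℝ}
    (h : Tendsto (fun M => ∑ m ∈ range M, coeff 3 (K0 t * (4 * RR β m 0))) atTop (𝓝 q)) :
    Tendsto (fun M => ∑ n ∈ range M, coeff 3 (K0 t * gg t 0 n)) atTop (𝓝 q) := by
  have h2 : Tendsto (fun M => Nm (K0 t * (4 * (∑ j∈range M, FF β 0 j - ∑ m∈range M, RR β m 0)))) atTop (𝓝 0) := by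
    have := (limit2 hβ).const_mul (Nm (K0 t) * Nm 4)
    rw [mul_zero] at this
    refine squeeze_zero (fun _ => Nm_nonneg _) (fun M => ?_) this
    rw [mul_assoc]
    exact Nm_mul_le le_rfl (Nm_mul _ _)
  have h3 := (tendsto_coeff_of_Nm h2 (by norm_num : 3 < 4)).add h
  rw [zero_add] at h3
  refine h3.congr fun M => ?_
  simp only [hg, ← map_sum, ← mul_sum, ← map_add]
  congr 1; ring

lemma transfer0 {t : ℝ} (ht : |t| ≤ 2) {q : ℝ}
    (h : Tendsto (fun M => ∑ n ∈ range M, coeff 3 (K0 t * gg t 0 n)) atTop (𝓝 q)) :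
    Tendsto (fun M => ∑ n ∈ range M, ct t n) atTop (𝓝 q) := by
  have h2 : Tendsto (fun M => Nm (K0 t * (∑ n∈range M, hh t n 0 - ∑ j∈range M, gg t 0 j))) atTop (𝓝 0) := by
    have := (main_limit ht).const_mul (Nm (K0 t))
    rw [mul_zero] at this
    exact squeeze_zero (fun _ => Nm_nonneg _) (fun M => Nm_mul _ _) this
  have h3 := (tendsto_coeff_of_Nm h2 (by norm_num : 3 < 4)).add h
  rw [zero_add] at h3
  refine h3.congr fun M => ?_
  simp only [ct, ← map_sum, ← mul_sum, ← map_add]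
  congr 1; ring

theorem q2_lim : Tendsto (fun M => ∑ n ∈ range M, coeff 3 (K0 2 * gg 2 0 n)) atTop (𝓝 (-68 * zeta 5 - 64)) := by
  refine transfer (β := 0) (by norm_num) gg2 ?_
  simp only [q2_term, sum_add_distrib, ← mul_sum]
  have := ((zeta_tendsto 5 (by norm_num)).const_mul (-130)).add ((odd_tendsto' 5 (by norm_num)).const_mul 64)
  convert this using 2
  ring

end S7

open Filter Topology
namespace S7
open PowerSeries Finset

noncomputable def qN (m : ℕ) : PowerSeries ℝ := L (2*m+3) 2 * L (2*m+3) 0 * L (m+1) 5 * L (m+1) 0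
noncomputable def qI (m : ℕ) : PowerSeries ℝ := I (2*m+3) 6 * I (2*m+3) (-4) * I (m+1) 3 * I (m+1) 2
noncomputable def qD (m : ℕ) : PowerSeries ℝ := L (2*m+3) 6 * L (2*m+3) (-4) * L (m+1) 3 * L (m+1) 2
noncomputable def Zp (m : ℕ) : PowerSeries ℝ := C 2 * (L 1 2 * I 1 6 * I 1 (-4)) * ∏ i ∈ range m, (qN i * qI i)

lemma Zp_succ (m : ℕ) : Zp (m+1) = Zp m * (qN m * qI m) := by
  unfold Zp; rw [prod_range_succ]; ring

lemma qD_mul (m : ℕ) : qD m * qI m = 1 := by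
  have h1 := L_mul_I (m := 2*(m:ℝ)+3) 6 (by positivity)
  have h2 := L_mul_I (m := 2*(m:ℝ)+3) (-4) (by positivity)
  have h3 := L_mul_I (m := (m:ℝ)+1) 3 (by positivity)
  have h4 := L_mul_I (m := (m:ℝ)+1) 2 (by positivity)
  unfold qD qI
  calc _ = (L (2*(m:ℝ)+3) 6 * I (2*m+3) 6) * (L (2*(m:ℝ)+3) (-4) * I (2*m+3) (-4)) * (L ((m:ℝ)+1) 3 * I (m+1) 3) * (L ((m:ℝ)+1) 2 * I (m+1) 2) := by ring
    _ = _ := by rw [h1, h2, h3, h4]; ring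

lemma qND (m : ℕ) : qN m - qD m = C (-6) * (L 1 (-4) * L (4*m+5) 6) * X * X := by
  unfold qN qD L
  simp only [map_add, map_mul, map_neg, map_one, map_ofNat, map_zero]
  generalize C (m:ℝ) = ν
  ring

lemma Vm1 (m : ℕ) : K0 (-1) * (4 * V (-1) m 0) = Zp m * L 1 (-4) * I (2*m+3) 6 * I (2*m+3) (-4) * I (m+1) 3 := by
  induction m with
  | zero =>
    have h2 := L_mul_I (m := 1) (-4) (by norm_num)
    have hI := I_two 1 3
    norm_num at hI
    unfold K0 Zp
    simp [V]
    norm_num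
    rw [hI, I_one_zero, show (C (2:ℝ) : PowerSeries ℝ) = 2 from map_ofNat C 2]
    have hc := C_half
    rw [show (C (2:ℝ) : PowerSeries ℝ) = 2 from map_ofNat C 2] at hc
    linear_combination (2 * (L 1 2 * I 1 6 * I 3 6 * I 1 3 * I 3 (-4))) * hc - (2 * (L 1 2 * I 1 6 * I 3 6 * I 1 3 * I 3 (-4))) * h2
  | succ m ih =>
    rw [V_succ_m, Zp_succ]
    unfold uA uE qN qI
    have e1 : 2*((m+1:ℕ):ℝ)+3 = 2*m+5 := by push_cast; ring
    have e2 : ((m+1:ℕ):ℝ)+1 = m+2 := by push_cast; ring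
    rw [e1, e2]
    norm_num
    linear_combination (L (2*m+3) 0 * L (m+1) 5 * L (m+1) 0 * I (m+1) 2 * L (2*m+3) 2 * I (2*m+5) 6 * I (2*m+5) (-4) * I (m+2) 3) * ih

lemma RRm1 (m : ℕ) : Zp (m+1) - Zp m = C (-6) * (K0 (-1) * (4 * RR (-1) m 0)) * X * X := by
  have h := Vm1 m
  have h2 := qND m
  have h3 := qD_mul m
  have e : K0 (-1) * (4 * RR (-1) m 0) = Zp m * (L 1 (-4) * L (4*m+5) 6) * qI m := by
    unfold RR qI
    norm_num
    rw [show L 1 0 = 1 by simp [L]]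
    linear_combination (L (4*m+5) 6 * I (m+1) 2) * h
  rw [e, Zp_succ]
  linear_combination Zp m * qI m * h2 + Zp m * h3

lemma RRm1_sum (M : ℕ) : ∑ m ∈ range M, coeff 3 (K0 (-1) * (4 * RR (-1) m 0)) =
    -1/6 * (coeff 5 (Zp M) - coeff 5 (Zp 0)) := by
  have : ∀ m, coeff 3 (K0 (-1) * (4 * RR (-1) m 0)) = -1/6 * (coeff 5 (Zp (m+1)) - coeff 5 (Zp m)) := by
    intro m
    rw [← map_sub, RRm1, coeff_succ_mul_X 4, coeff_succ_mul_X 3, coeff_C_mul]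
    ring
  simp only [this, ← mul_sum]
  rw [sum_range_sub (fun m => coeff 5 (Zp m))]

noncomputable def pZ (i : ℕ) (k : ℕ) : ℝ :=
  (lam (2*i+3) 2 k - lam (2*i+3) 6 k - lam (2*i+3) (-4) k + lam (i+1) 5 k - lam (i+1) 3 k - lam (i+1) 2 k)

lemma lam_zero (m : ℝ) (k : ℕ) : lam m 0 k = 0 := by
  unfold lam
  rcases k with _ | k
  · simp
  · simp

lemma LJ_q (i : ℕ) : LJ (qN i * qI i) 1 (pZ i) := by
  have a1 : (2*(i:ℝ)+3) ≠ 0 := by positivity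
  have a2 : ((i:ℝ)+1) ≠ 0 := by positivity
  have := ((((LJ_L' 2 a1).mul (LJ_L' 0 a1)).mul (LJ_L' 5 a2)).mul (LJ_L' 0 a2)).mul
    ((((LJ_I' 6 a1).mul (LJ_I' (-4) a1)).mul (LJ_I' 3 a2)).mul (LJ_I' 2 a2))
  refine LJ.congr this ?_ ?_
  · field_simp
  · intro k; simp only [lam_zero]; unfold pZ; ring

lemma LJ_Zp (M : ℕ) : LJ (Zp M) 2 (fun k => lam 1 2 k - lam 1 6 k - lam 1 (-4) k + ∑ i ∈ range M, pZ i k) := by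
  have a1 : (1:ℝ) ≠ 0 := one_ne_zero
  have := ((LJ_C 2).mul (((LJ_L' 2 a1).mul (LJ_I' 6 a1)).mul (LJ_I' (-4) a1))).mul (LJ_prod LJ_q M)
  refine LJ.congr this (by simp) ?_
  intro k; ring

lemma pZ1 (i : ℕ) : pZ i 1 = 0 := by unfold pZ lam; field_simp; ring
lemma pZ2 (i : ℕ) : pZ i 2 = 24 * (1/(2*(i:ℝ)+3)^2) - 6 * (1/((i:ℝ)+1)^2) := by
  unfold pZ lam; field_simp; ring
lemma pZ3 (i : ℕ) : pZ i 3 = -48 * (1/(2*(i:ℝ)+3)^3) + 30 * (1/((i:ℝ)+1)^3) := by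
  unfold pZ lam; field_simp; ring
lemma pZ5 (i : ℕ) : pZ i 5 = -1344 * (1/(2*(i:ℝ)+3)^5) + 570 * (1/((i:ℝ)+1)^5) := by
  unfold pZ lam; field_simp; ring

lemma Zp_coeff (M : ℕ) : coeff 5 (Zp M) = 2 * ((-1344 + ∑ i ∈ range M, pZ i 5) +
    (24 + ∑ i ∈ range M, pZ i 2) * (-48 + ∑ i ∈ range M, pZ i 3)) := by
  have h := (LJ_Zp M).h5
  rw [h]
  have e1 : lam 1 2 1 - lam 1 6 1 - lam 1 (-4) 1 + ∑ i ∈ range M, pZ i 1 = 0 := by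
    simp [pZ1]; unfold lam; norm_num
  have e2 : lam 1 2 2 - lam 1 6 2 - lam 1 (-4) 2 = 24 := by unfold lam; norm_num
  have e3 : lam 1 2 3 - lam 1 6 3 - lam 1 (-4) 3 = -48 := by unfold lam; norm_num
  have e5 : lam 1 2 5 - lam 1 6 5 - lam 1 (-4) 5 = -1344 := by unfold lam; norm_num
  simp only [e1, e2, e3, e5]
  ring

theorem qm1_lim : Tendsto (fun M => ∑ n ∈ range M, coeff 3 (K0 (-1) * gg (-1) 0 n)) atTop
    (𝓝 (244 * zeta 5 + 48 * zeta 2 * zeta 3 - 832)) := by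
  refine transfer (β := -1) (by norm_num) ggm1 ?_
  simp only [RRm1_sum, Zp_coeff, pZ2, pZ3, pZ5, sum_add_distrib, sum_sub_distrib, ← mul_sum]
  have z5 := (((odd_tendsto' 5 (by norm_num)).const_mul (-1344)).add ((zeta_tendsto 5 (by norm_num)).const_mul 570)).const_add (-1344)
  have z2 := (((odd_tendsto' 2 (by norm_num)).const_mul 24).sub ((zeta_tendsto 2 (by norm_num)).const_mul 6)).const_add 24
  have z3 := (((odd_tendsto' 3 (by norm_num)).const_mul (-48)).add ((zeta_tendsto 3 (by norm_num)).const_mul 30)).const_add (-48)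
  have := (((z5.add (z2.mul z3)).const_mul 2).sub_const (2*(-1344+24*(-48)))).const_mul (-1/6)
  convert this using 2
  · simp
  · ring

end S7

open Filter Topology
namespace S7
open PowerSeries Finset

noncomputable def pg (t : ℝ) (i : ℝ) (k : ℕ) : ℝ :=
  lam (2*i+2) (4-2*t) k + lam (2*i+3) (-2*t) k + lam (i+1) (t-1) k + lam (2*i+3) (2*t-2) k
  - lam (2*i+4) (4-2*t) k - lam (2*i+5) (4-2*t) k - lam (i+2) (t+1) k - lam (2*i+5) (2*t-2) k

lemma LJ_bd (t : ℝ) (i : ℕ) : LJ (bN t i * dI t i) (((i:ℝ)+1)^2*(2*i+3)^2/((i+2)^2*(2*i+5)^2)) (pg t i) := by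
  have a1 : (2*(i:ℝ)+2) ≠ 0 := by positivity
  have a2 : (2*(i:ℝ)+3) ≠ 0 := by positivity
  have a3 : ((i:ℝ)+1) ≠ 0 := by positivity
  have a4 : (2*(i:ℝ)+4) ≠ 0 := by positivity
  have a5 : (2*(i:ℝ)+5) ≠ 0 := by positivity
  have a6 : ((i:ℝ)+2) ≠ 0 := by positivity
  have := ((((LJ_L' (4-2*t) a1).mul (LJ_L' (-2*t) a2)).mul (LJ_L' (t-1) a3)).mul (LJ_L' (2*t-2) a2)).mul
    ((((LJ_I' (4-2*t) a4).mul (LJ_I' (4-2*t) a5)).mul (LJ_I' (t+1) a6)).mul (LJ_I' (2*t-2) a5))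
  refine LJ.congr this ?_ ?_
  · rw [show (2*(i:ℝ)+4) = 2*(i+2) by ring, show (2*(i:ℝ)+2) = 2*(i+1) by ring]; field_simp
  · intro k; unfold pg; ring

lemma prod_cg (n : ℕ) : ∏ i ∈ range n, (((i:ℝ)+1)^2*(2*i+3)^2/((i+2)^2*(2*i+5)^2)) = 9/(((n:ℝ)+1)^2*(2*n+3)^2) := by
  induction n with
  | zero => norm_num
  | succ n ih => rw [prod_range_succ, ih]; push_cast; field_simp; ring

noncomputable def preg (t n : ℝ) (k : ℕ) : ℝ :=
  lam (2*n+1) (-2*t) k - lam (2*n+1) (4-2*t) k - lam (2*n+3) (4-2*t) k - lam (2*n+2) (4-2*t) k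
   - lam (2*n+3) (2*t-2) k - lam (n+1) (t+1) k

lemma pgs1 (t : ℝ) (n : ℕ) : pK t 1 + ∑ i ∈ range n, pg t i 1 = preg t n 1 - 4 * H 1 (2*n) := by
  induction n with
  | zero => simp [pK, preg, H_zero]; ring
  | succ n ih =>
    rw [sum_range_succ, ← add_assoc, ih, H_two_succ]
    unfold preg pg lam; push_cast
    field_simp; ring

lemma pgs2 (t : ℝ) (n : ℕ) : pK t 2 + ∑ i ∈ range n, pg t i 2 = preg t n 2 + ((8-8*t)*(H 2 (2*n) - H 2 n/4) + 2*t*H 2 n) := by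
  induction n with
  | zero => simp [pK, preg, H_zero]; ring
  | succ n ih =>
    rw [sum_range_succ, ← add_assoc, ih, H_two_succ, H_succ]
    unfold preg pg lam; push_cast
    field_simp; ring

lemma pgs3 (t : ℝ) (n : ℕ) : pK t 3 + ∑ i ∈ range n, pg t i 3 = preg t n 3 +
   ((-8*t^3-(4-2*t)^3)/3*(H 3 (2*n) - H 3 n/8) + (-6*t^2-2)/3*H 3 n) := by
  induction n with
  | zero => simp [pK, preg, H_zero]; ring
  | succ n ih =>
    rw [sum_range_succ, ← add_assoc, ih, H_two_succ, H_succ]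
    unfold preg pg lam; push_cast
    field_simp; ring

lemma cg_eq (t : ℝ) (n : ℕ) : ∃ p1 p2 p3 : ℝ,
    p1 = preg t n 1 + lam (4*n+5) 2 1 - 4 * H 1 (2*n) ∧
    p2 = preg t n 2 + lam (4*n+5) 2 2 + ((8-8*t)*(H 2 (2*n) - H 2 n/4) + 2*t*H 2 n) ∧
    p3 = preg t n 3 + lam (4*n+5) 2 3 + ((-8*t^3-(4-2*t)^3)/3*(H 3 (2*n) - H 3 n/8) + (-6*t^2-2)/3*H 3 n) ∧
    coeff 3 (K0 t * gg t 0 n) = 2*(4*n+5) / ((n+1)^2*(2*n+3)^2) * (p3 + p1*p2 + p1^3/6) := by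
  refine ⟨_, _, _, rfl, rfl, rfl, ?_⟩
  have a1 : (4*(n:ℝ)+5) ≠ 0 := by positivity
  have key := ((LJ_C 4).mul (LJ_L' 2 a1)).mul ((LJ_K0 t).mul (LJ_prod (LJ_bd t) n))
  have e : K0 t * gg t 0 n = C 4 * L (4*n+5) 2 * (K0 t * (∏ i ∈ range n, (bN t i * dI t i))) := by
    unfold gg W
    simp only [range_zero, prod_empty, zero_add, prod_mul_distrib]
    rw [show (C (4:ℝ) : PowerSeries ℝ) = 4 from map_ofNat C 4]
    push_cast
    rw [show 4*(n:ℝ)+2*0+5 = 4*n+5 by ring]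
    ring
  rw [e, key.h3]
  rw [pgs1, pgs2, pgs3, prod_cg]
  field_simp
  ring

noncomputable def ww (n : ℕ) : ℝ := 4*(-1)^(n+1)*(-2*H 1 n/((n:ℝ)+1)^4 - 2*H 3 n/((n:ℝ)+1)^2
  - 2*(2+(-1)^(n+1))/((n:ℝ)+1)^5)

lemma ee_term (n : ℕ) : coeff 3 (K0 1 * gg 1 0 n) + coeff 3 (K0 (-1) * gg (-1) 0 n)
    - 2 * coeff 3 (K0 0 * gg 0 0 n) = 32 * (ww (2*n+1) + ww (2*n+2)) := by
  obtain ⟨y1, y2, y3, hy1, hy2, hy3, hy⟩ := cg_eq (-1) n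
  obtain ⟨z1, z2, z3, hz1, hz2, hz3, hz⟩ := cg_eq 1 n
  obtain ⟨w1, w2, w3, hw1, hw2, hw3, hw⟩ := cg_eq 0 n
  rw [hy, hz, hw]
  unfold ww
  rw [show H 1 (2*n+2) = _ from H_two_succ 1 n, show H 3 (2*n+2) = _ from H_two_succ 3 n, H_succ, H_succ]
  have s1 : (-1:ℝ)^(2*n+1+1) = 1 := by rw [show 2*n+1+1 = 2*(n+1) by ring, pow_mul]; norm_num
  have s2 : (-1:ℝ)^(2*n+2+1) = -1 := by rw [show 2*n+2+1 = 2*(n+1)+1 by ring, pow_succ, pow_mul]; norm_num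
  rw [s1, s2]
  subst hy1 hy2 hy3 hz1 hz2 hz3 hw1 hw2 hw3
  unfold preg lam
  push_cast
  generalize H 1 (2*n) = A1
  generalize H 2 (2*n) = A
  generalize H 2 n = B
  generalize H 3 (2*n) = A3
  generalize H 3 n = B3
  have hn : (0:ℝ) ≤ n := by positivity
  generalize (n:ℝ) = x at *
  have e2 : 2*x+2 = 2*(x+1) := by ring
  have e3 : 2*x+1+1 = 2*(x+1) := by ring
  have e4 : 2*(x+1)+1 = 2*x+3 := by ring
  rw [e2, e3, e4]
  have a1 : 2*x+1 ≠ 0 := by positivity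
  have a2 : x+1 ≠ 0 := by positivity
  have a3 : 2*x+3 ≠ 0 := by positivity
  have a4 : 4*x+5 ≠ 0 := by positivity
  norm_num
  field_simp
  ring

end S7

open Filter Topology
namespace S7
open Finset

noncomputable def AA (n : ℕ) : ℝ := ∑ k ∈ range n, (-1:ℝ)^(k+1)/((k:ℝ)+1)
lemma AA_zero : AA 0 = 0 := by simp [AA]
lemma AA_succ (n : ℕ) : AA (n+1) = AA n + (-1:ℝ)^(n+1)/((n:ℝ)+1) := by
  unfold AA; rw [sum_range_succ]

lemma sgn_sq (n : ℕ) : (-1:ℝ)^n * (-1:ℝ)^n = 1 := by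
  rw [← mul_pow]; norm_num

lemma AA_alt (d : ℕ) : ∀ n : ℕ, 0 ≤ (-1:ℝ)^(n+1) * (AA (n+d) - AA n) ∧
    (-1:ℝ)^(n+1) * (AA (n+d) - AA n) ≤ 1/((n:ℝ)+1) := by
  induction d with
  | zero => intro n; simp; positivity
  | succ d ih =>
    intro n
    obtain ⟨h1, h2⟩ := ih (n+1)
    have e : (-1:ℝ)^(n+1) * (AA (n+(d+1)) - AA n) = 1/((n:ℝ)+1) - (-1:ℝ)^(n+1+1) * (AA (n+1+d) - AA (n+1)) := by
      rw [AA_succ n, show n+(d+1) = n+1+d by ring, pow_succ (-1:ℝ) (n+1)]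
      have := sgn_sq (n+1)
      field_simp
      linear_combination this
    rw [e]
    push_cast at h2
    have : 1/((n:ℝ)+1+1) ≤ 1/((n:ℝ)+1) := by gcongr; linarith
    constructor <;> linarith

lemma AA_bound {n m : ℕ} (h : n ≤ m) : |AA n - AA m| ≤ 1/((n:ℝ)+1) := by
  obtain ⟨d, rfl⟩ := Nat.exists_eq_add_of_le h
  obtain ⟨h1, h2⟩ := AA_alt d n
  have : |AA n - AA (n+d)| = |(-1:ℝ)^(n+1) * (AA (n+d) - AA n)| := by
    rw [abs_mul, abs_pow, abs_neg, abs_one, one_pow, one_mul, abs_sub_comm]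
  rw [this, abs_of_nonneg h1]; exact h2

lemma AA_two (n : ℕ) : AA (2*n) = H 1 n - H 1 (2*n) := by
  induction n with
  | zero => simp [AA_zero, H_zero]
  | succ n ih =>
    rw [H_two_succ, H_succ, show 2*(n+1) = 2*n+1+1 by ring, AA_succ, AA_succ, ih,
      show (-1:ℝ)^(2*n+1) = -1 by rw [pow_succ, pow_mul]; norm_num,
      show (-1:ℝ)^(2*n+1+1) = 1 by rw [show 2*n+1+1 = 2*(n+1) by ring, pow_mul]; norm_num]
    push_cast
    norm_num
    field_simp
    ring

lemma err_lim {e : ℕ → ℕ → ℝ} (h : ∀ N i, i < N → |e N i| ≤ 1/(((i:ℝ)+1)^3 * ((N:ℝ)-i))) :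
    Tendsto (fun N => ∑ i ∈ range N, e N i) atTop (𝓝 0) := by
  have hb : Tendsto (fun N : ℕ => zeta 2 * (1/(N:ℝ))) atTop (𝓝 0) := by
    have := tendsto_one_div_atTop_nhds_zero_nat (𝕜 := ℝ)
    simpa using this.const_mul (zeta 2)
  refine squeeze_zero_norm (fun N => ?_) hb
  rw [Real.norm_eq_abs]
  refine (abs_sum_le_sum_abs _ _).trans ?_
  have h1 : ∑ i ∈ range N, |e N i| ≤ ∑ i ∈ range N, 1/((i:ℝ)+1)^2 * (1/(N:ℝ)) := by
    refine sum_le_sum fun i hi => ?_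
    rw [mem_range] at hi
    refine (h N i hi).trans ?_
    have hi' : (i:ℝ)+1 ≤ N := by exact_mod_cast hi
    have hi0 : (0:ℝ) ≤ i := by positivity
    have hN : (0:ℝ) < N := by linarith
    have hNi : (0:ℝ) < N - i := by linarith
    rw [← one_div_mul_one_div, one_div_mul_one_div, one_div_mul_one_div]
    refine one_div_le_one_div_of_le (by positivity) ?_
    have : (N:ℝ) ≤ ((i:ℝ)+1) * (N-i) := by nlinarith
    calc ((i:ℝ)+1)^2 * N ≤ ((i:ℝ)+1)^2 * (((i:ℝ)+1) * (N-i)) := by gcongr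
      _ = _ := by ring
  refine h1.trans ?_
  rw [← sum_mul]
  have : ∑ i ∈ range N, 1/((i:ℝ)+1)^2 ≤ zeta 2 :=
    (zsum 2 le_rfl).sum_le_tsum _ (fun i _ => by positivity)
  gcongr

/-- alternating zeta sums -/
lemma alt_tendsto (k : ℕ) (hk : 2 ≤ k) :
    Tendsto (fun N => ∑ J ∈ range N, (-1:ℝ)^(J+1)/((J:ℝ)+1)^k) atTop (𝓝 (-(1-2/2^k) * zeta k)) := by
  have hs : Summable (fun J : ℕ => (-1:ℝ)^(J+1)/((J:ℝ)+1)^k) := by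
    refine Summable.of_norm ?_
    refine (zsum k hk).congr fun n => ?_
    rw [norm_div, norm_pow, norm_neg, norm_one, one_pow, Real.norm_of_nonneg (by positivity)]
  have h1 := hs.hasSum.tendsto_sum_nat
  have h2 := h1.comp tendsto_two_mul
  have h3 := ((zeta_tendsto k hk).const_mul (1/2^k)).sub (odd_tendsto k hk)
  have : Tendsto ((fun N => ∑ J ∈ range N, (-1:ℝ)^(J+1)/((J:ℝ)+1)^k) ∘ fun M => 2*M) atTop
      (𝓝 (-(1-2/2^k) * zeta k)) := by
    convert h3 using 1
    · funext M
      simp only [Function.comp]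
      rw [even_odd_sum, mul_sum, add_comm, sub_eq_add_neg, ← sum_neg_distrib]
      congr 1 <;> refine sum_congr rfl fun m _ => ?_
      · rw [show 2*m+1+1 = 2*(m+1) by ring, pow_mul]
        push_cast
        rw [show (2*(m:ℝ)+1+1) = 2*(m+1) by ring, mul_pow]
        norm_num; field_simp
      · rw [pow_succ, pow_mul]; push_cast; norm_num; ring
    · congr 1; ring
  rw [← tendsto_nhds_unique h2 this]
  exact h1

/-- kernel -/
noncomputable def rr (i J : ℕ) : ℝ := 1/((J:ℝ)-i) - 1/((J:ℝ)+i+2)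

lemma H_shift (s m d : ℕ) : ∑ q ∈ range d, 1/((m:ℝ)+q+1)^s = H s (m+d) - H s m := by
  induction d with
  | zero => simp
  | succ d ih => rw [sum_range_succ, ih, ← add_assoc, H_succ]; push_cast; ring

lemma AA_shift (m d : ℕ) : ∑ q ∈ range d, (-1:ℝ)^(m+q+1)/((m:ℝ)+q+1) = AA (m+d) - AA m := by
  induction d with
  | zero => simp
  | succ d ih => rw [sum_range_succ, ih, ← add_assoc, AA_succ]; push_cast; ring

lemma sum_split (f : ℕ → ℝ) (i e : ℕ) : ∑ J ∈ range (i+1+e), f J =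
    ∑ q ∈ range i, f (i-1-q) + f i + ∑ q ∈ range e, f (i+1+q) := by
  rw [sum_range_add, sum_range_succ, sum_range_reflect]

lemma sum_d1 (J : ℕ) : ∑ q ∈ range J, 1/((J:ℝ)-q) = H 1 J := by
  rw [← sum_range_reflect]
  unfold H
  refine sum_congr rfl fun q hq => ?_
  rw [mem_range] at hq
  have : ((J-1-q:ℕ):ℝ) = J-1-q := by
    rw [Nat.sub_sub, Nat.cast_sub (by omega)]; push_cast; ring
  rw [this]; congr 1; ring

/-- R1, finite version -/
lemma R1_tri (J : ℕ) : ∑ i ∈ range J, rr i J = H 1 J + H 1 (J+1) - H 1 (2*J+1) := by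
  unfold rr
  rw [sum_sub_distrib, sum_d1]
  have := H_shift 1 (J+1) J
  rw [show J+1+J = 2*J+1 by ring] at this
  have h2 : ∑ i ∈ range J, 1/((J:ℝ)+i+2) = ∑ q ∈ range J, 1/(((J+1:ℕ):ℝ)+q+1)^1 := by
    refine sum_congr rfl fun q _ => ?_
    push_cast; rw [pow_one]; congr 1; ring
  rw [h2, this]; ring

lemma R1_row (i e : ℕ) : ∑ q ∈ range e, (-1:ℝ)^(i+1+q+1) * rr i (i+1+q) =
    (-1:ℝ)^(i+1) * (AA e - AA (2*i+2+e) + AA (2*(i+1))) := by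
  have h1 := AA_shift 0 e
  have h2 := AA_shift (2*i+2) e
  rw [AA_zero, sub_zero, zero_add] at h1
  rw [show 2*(i+1) = 2*i+2 by ring, show AA e - AA (2*i+2+e) + AA (2*i+2) = AA e - (AA (2*i+2+e) - AA (2*i+2)) by ring, ← h1, ← h2, ← sum_sub_distrib, mul_sum]
  refine sum_congr rfl fun q _ => ?_
  unfold rr
  push_cast
  rw [show (-1:ℝ)^(2*i+2+q+1) = (-1:ℝ)^(q+1) by
    rw [show 2*i+2+q+1 = 2*(i+1)+(q+1) by ring, pow_add, pow_mul]; norm_num]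
  rw [show i+1+q+1 = (i+1)+(q+1) by ring, pow_add]
  rw [show (i:ℝ)+1+q-i = q+1 by ring, show (i:ℝ)+1+q+i+2 = 2*i+2+q+1 by ring]
  simp only [zero_add, Nat.cast_zero]
  ring

lemma R1_term {i J : ℕ} (h : i < J) : 2/(((i:ℝ)+1)^3*((J:ℝ)+1)^2) + 2/(((i:ℝ)+1)*((J:ℝ)+1)^4) =
    rr i J * (1/((i:ℝ)+1)^4 - 1/((J:ℝ)+1)^4) := by
  obtain ⟨d, rfl⟩ := Nat.exists_eq_add_of_lt h
  unfold rr
  push_cast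
  rw [show (i:ℝ)+d+1-i = d+1 by ring]
  field_simp
  ring

lemma tri_swap (g : ℕ → ℕ → ℝ) (N : ℕ) : ∑ J ∈ range N, ∑ i ∈ range J, g i J =
    ∑ i ∈ range N, ∑ q ∈ range (N-1-i), g i (i+1+q) := by
  have : ∀ i ∈ range N, ∑ q ∈ range (N-1-i), g i (i+1+q) = ∑ J ∈ Ico (i+1) N, g i J := by
    intro i _
    rw [sum_Ico_eq_sum_range, show N-(i+1) = N-1-i by omega]
  rw [sum_congr rfl this]
  refine sum_comm' fun x y => ?_
  simp only [mem_range, mem_Ico]; omega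

lemma R1_fin (N : ℕ) : ∑ J ∈ range N, (-1:ℝ)^(J+1) * (2*H 3 J/((J:ℝ)+1)^2 + 2*H 1 J/((J:ℝ)+1)^4) =
    - ∑ J ∈ range N, (-1:ℝ)^(J+1) * H 1 J/((J:ℝ)+1)^4 - 1/2 * ∑ J ∈ range N, (-1:ℝ)^(J+1)/((J:ℝ)+1)^5
    + ∑ i ∈ range N, (-1:ℝ)^(i+1) * (AA (N-1-i) - AA (2*i+2+(N-1-i))) /((i:ℝ)+1)^4 := by
  have e1 : ∀ J ∈ range N, (-1:ℝ)^(J+1) * (2*H 3 J/((J:ℝ)+1)^2 + 2*H 1 J/((J:ℝ)+1)^4) =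
     ∑ i ∈ range J, (-1:ℝ)^(J+1) * rr i J / ((i:ℝ)+1)^4
       - (-1:ℝ)^(J+1) * (H 1 J + H 1 (J+1) - H 1 (2*J+1)) /((J:ℝ)+1)^4 := by
    intro J _
    rw [← R1_tri, mul_sum, sum_div, ← sum_sub_distrib]
    have : 2*H 3 J/((J:ℝ)+1)^2 + 2*H 1 J/((J:ℝ)+1)^4 = ∑ i ∈ range J, (2/(((i:ℝ)+1)^3*((J:ℝ)+1)^2) + 2/(((i:ℝ)+1)*((J:ℝ)+1)^4)) := by
      unfold H
      rw [mul_sum, mul_sum, sum_div, sum_div, ← sum_add_distrib]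
      refine sum_congr rfl fun i _ => ?_
      field_simp
    rw [this, mul_sum]
    refine sum_congr rfl fun i hi => ?_
    rw [R1_term (mem_range.1 hi)]; ring
  rw [sum_congr rfl e1, sum_sub_distrib, tri_swap]
  have e2 : ∀ i ∈ range N, ∑ q ∈ range (N-1-i), (-1:ℝ)^(i+1+q+1) * rr i (i+1+q) / ((i:ℝ)+1)^4 =
     (-1:ℝ)^(i+1) * (AA (N-1-i) - AA (2*i+2+(N-1-i)))/((i:ℝ)+1)^4 + (-1:ℝ)^(i+1) * (H 1 (i+1) - H 1 (2*(i+1)))/((i:ℝ)+1)^4 := by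
    intro i _
    rw [← sum_div, R1_row, AA_two]; ring
  rw [sum_congr rfl e2, sum_add_distrib, mul_sum, ← sum_neg_distrib, ← sum_sub_distrib]
  rw [add_sub_assoc, ← sum_sub_distrib, add_comm]
  congr 1
  refine sum_congr rfl fun i _ => ?_
  rw [show 2*(i+1) = 2*i+1+1 by ring, H_succ, H_succ]
  push_cast
  field_simp
  ring

end S7

open Filter Topology
namespace S7
open PowerSeries Finset

lemma X_row (i e : ℕ) : ∑ J ∈ range (i+1+e), (-1:ℝ)^(J+1) * rr i J =
    (-1:ℝ)^(i+1) * (AA e - AA (2*i+2+e)) + 1/((i:ℝ)+1) := by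
  have h0 : ∑ J ∈ range (i+1+e), (-1:ℝ)^(J+1) * rr i J = ∑ J ∈ range (i+1+e), (-1:ℝ)^(J+1) * (1/((J:ℝ)-i)) -
     ∑ J ∈ range (i+1+e), (-1:ℝ)^(J+1) * (1/((J:ℝ)+i+2)) := by
    rw [← sum_sub_distrib]; refine sum_congr rfl fun J _ => ?_; unfold rr; ring
  have h2 : ∑ J ∈ range (i+1+e), (-1:ℝ)^(J+1) * (1/((J:ℝ)+i+2)) = (-1:ℝ)^(i+1) * (AA (2*i+2+e) - AA (i+1)) := by
    have := AA_shift (i+1) (i+1+e)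
    rw [show i+1+(i+1+e) = 2*i+2+e by ring] at this
    rw [← this, mul_sum]
    refine sum_congr rfl fun J _ => ?_
    rw [show i+1+J+1 = (i+1)+(J+1) by ring, pow_add]
    push_cast
    rw [show (i:ℝ)+1+J+1 = J+i+2 by ring]
    have := sgn_sq (i+1)
    linear_combination (-(-1:ℝ)^(J+1) * (1/((J:ℝ)+i+2))) * this
  have h1 : ∑ J ∈ range (i+1+e), (-1:ℝ)^(J+1) * (1/((J:ℝ)-i)) = (-1:ℝ)^(i+1) * (AA e - AA i) := by
    rw [sum_split, mul_sub]
    have a1 : ∑ q ∈ range i, (-1:ℝ)^(i-1-q+1) * (1/(((i-1-q:ℕ):ℝ)-i)) = - ((-1:ℝ)^(i+1) * AA i) := by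
      unfold AA
      rw [mul_sum, ← sum_neg_distrib]
      refine sum_congr rfl fun q hq => ?_
      rw [mem_range] at hq
      obtain ⟨d, rfl⟩ := Nat.exists_eq_add_of_lt hq
      rw [show q+d+1-1-q = d by omega, show q+d+1+1 = (d+1)+(q+1) by ring, pow_add]
      push_cast
      rw [show (d:ℝ)-(q+d+1) = -(q+1) by ring]
      have := sgn_sq (q+1)
      rw [one_div, inv_neg, div_eq_mul_inv]
      linear_combination (((q:ℝ)+1)⁻¹ * (-1)^(d+1)) * this
    have a2 : ∑ q ∈ range e, (-1:ℝ)^(i+1+q+1) * (1/(((i+1+q:ℕ):ℝ)-i)) = (-1:ℝ)^(i+1) * AA e := by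
      unfold AA
      rw [mul_sum]
      refine sum_congr rfl fun q hq => ?_
      push_cast
      rw [show (i:ℝ)+1+q-i = q+1 by ring, add_assoc (i+1), pow_add]
      ring
    rw [a1, a2]; simp; ring
  rw [h0, h1, h2, AA_succ]
  have := sgn_sq (i+1)
  field_simp
  linear_combination this

lemma Y_col (J e : ℕ) : ∑ i ∈ range (J+1+e), rr i J = H 1 J + H 1 (J+1) - H 1 e - H 1 (2*J+2+e) := by
  unfold rr
  rw [sum_sub_distrib]
  have h2 : ∑ i ∈ range (J+1+e), 1/((J:ℝ)+i+2) = H 1 (2*J+2+e) - H 1 (J+1) := by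
    have := H_shift 1 (J+1) (J+1+e)
    rw [show J+1+(J+1+e) = 2*J+2+e by ring] at this
    rw [← this]
    refine sum_congr rfl fun q _ => ?_
    push_cast; rw [pow_one]; congr 1; ring
  have h1 : ∑ i ∈ range (J+1+e), 1/((J:ℝ)-i) = H 1 J - H 1 e := by
    rw [sum_range_add, sum_range_succ, sum_d1]
    have : ∑ q ∈ range e, 1/((J:ℝ)-((J+1+q:ℕ):ℝ)) = - H 1 e := by
      unfold H
      rw [← sum_neg_distrib]
      refine sum_congr rfl fun q _ => ?_
      push_cast
      rw [show (J:ℝ)-(J+1+q) = -(q+1) by ring, pow_one, one_div, one_div, inv_neg]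
    rw [this]; simp; ring
  rw [h1, h2]; ring

lemma R2_term (i J : ℕ) : (-1:ℝ)^(J+1)/((J:ℝ)+1)^2 * (1/((i:ℝ)+1)^3) =
    (-1:ℝ)^(J+1) * rr i J * (1/(2*((i:ℝ)+1)^4)) - (-1:ℝ)^(J+1)/((J:ℝ)+1)^4 * (1/((i:ℝ)+1)^1 + rr i J/2)
    + if i = J then 2 * ((-1:ℝ)^(J+1)/((J:ℝ)+1)^5) else 0 := by
  split_ifs with h
  · subst h
    unfold rr
    simp only [sub_self, div_zero]
    field_simp
    ring
  · have h' : (J:ℝ)-i ≠ 0 := by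
      intro h2; apply h
      have : (i:ℝ) = J := by linarith
      exact_mod_cast this
    unfold rr
    have : (J:ℝ)+i+2 ≠ 0 := by positivity
    field_simp
    ring

lemma R2_fin (N : ℕ) : (∑ J ∈ range N, (-1:ℝ)^(J+1)/((J:ℝ)+1)^2) * (∑ i ∈ range N, 1/((i:ℝ)+1)^3) =
    1/2 * (∑ i ∈ range N, 1/((i:ℝ)+1)^5) + 3/2 * (∑ J ∈ range N, (-1:ℝ)^(J+1)/((J:ℝ)+1)^5)
    - ∑ J ∈ range N, (-1:ℝ)^(J+1) * H 1 J/((J:ℝ)+1)^4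
    + ∑ i ∈ range N, (-1:ℝ)^(i+1) * (AA (N-1-i) - AA (2*i+2+(N-1-i))) /(2*((i:ℝ)+1)^4)
    - ∑ J ∈ range N, (-1:ℝ)^(J+1) * (H 1 N - H 1 (N-1-J)/2 - H 1 (2*J+2+(N-1-J))/2) / ((J:ℝ)+1)^4 := by
  rw [sum_mul_sum]
  simp only [R2_term, sum_add_distrib, sum_sub_distrib]
  have e3 : ∑ J ∈ range N, ∑ i ∈ range N, (if i = J then 2 * ((-1:ℝ)^(J+1)/((J:ℝ)+1)^5) else 0) =
      2 * ∑ J ∈ range N, (-1:ℝ)^(J+1)/((J:ℝ)+1)^5 := by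
    rw [mul_sum]
    refine sum_congr rfl fun J hJ => ?_
    rw [sum_ite_eq', if_pos hJ]
  have e1 : ∑ J ∈ range N, ∑ i ∈ range N, (-1:ℝ)^(J+1) * rr i J * (1/(2*((i:ℝ)+1)^4)) =
     ∑ i ∈ range N, ((-1:ℝ)^(i+1) * (AA (N-1-i) - AA (2*i+2+(N-1-i))) /(2*((i:ℝ)+1)^4) + 1/2*(1/((i:ℝ)+1)^5)) := by
    rw [sum_comm]
    refine sum_congr rfl fun i hi => ?_
    rw [mem_range] at hi
    rw [← sum_mul]
    have := X_row i (N-1-i)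
    rw [show i+1+(N-1-i) = N by omega] at this
    rw [this]; field_simp
  have e2 : ∑ J ∈ range N, ∑ i ∈ range N, (-1:ℝ)^(J+1)/((J:ℝ)+1)^4 * (1/((i:ℝ)+1)^1 + rr i J/2) =
     ∑ J ∈ range N, ((-1:ℝ)^(J+1) * H 1 J/((J:ℝ)+1)^4 + 1/2 * ((-1:ℝ)^(J+1)/((J:ℝ)+1)^5) +
       (-1:ℝ)^(J+1) * (H 1 N - H 1 (N-1-J)/2 - H 1 (2*J+2+(N-1-J))/2) / ((J:ℝ)+1)^4) := by
    refine sum_congr rfl fun J hJ => ?_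
    rw [mem_range] at hJ
    have := Y_col J (N-1-J)
    rw [show J+1+(N-1-J) = N by omega] at this
    rw [← mul_sum, sum_add_distrib, ← sum_div, this, H_succ, show ∑ i ∈ range N, 1/((i:ℝ)+1)^1 = H 1 N from rfl]
    field_simp
    ring
  rw [e1, e2, e3]
  simp only [sum_add_distrib, ← mul_sum]
  ring

lemma H_diff (m d : ℕ) : 0 ≤ H 1 (m+d) - H 1 m ∧ H 1 (m+d) - H 1 m ≤ d/((m:ℝ)+1) := by
  rw [← H_shift]
  constructor
  · exact sum_nonneg fun q _ => by positivity
  · have : ∑ q ∈ range d, 1/((m:ℝ)+q+1)^1 ≤ ∑ q ∈ range d, 1/((m:ℝ)+1) := by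
      refine sum_le_sum fun q _ => ?_
      rw [pow_one]; gcongr; linarith [(Nat.cast_nonneg q : (0:ℝ) ≤ q)]
    refine this.trans (le_of_eq ?_)
    simp; ring

lemma err1 {N i : ℕ} (h : i < N) : |(-1:ℝ)^(i+1) * (AA (N-1-i) - AA (2*i+2+(N-1-i))) /((i:ℝ)+1)^4| ≤
    1/(((i:ℝ)+1)^3 * ((N:ℝ)-i)) := by
  obtain ⟨d, rfl⟩ := Nat.exists_eq_add_of_lt h
  rw [show i+d+1-1-i = d by omega]
  push_cast
  rw [show (i:ℝ)+d+1-i = d+1 by ring, abs_div, abs_mul, abs_pow, abs_neg, abs_one, one_pow, one_mul]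
  have := AA_bound (n := d) (m := 2*i+2+d) (by omega)
  rw [abs_of_nonneg (by positivity : (0:ℝ) ≤ ((i:ℝ)+1)^4)]
  calc _ ≤ (1/((d:ℝ)+1))/((i:ℝ)+1)^4 := by gcongr
    _ = 1/((d+1)*((i:ℝ)+1)^4) := by field_simp
    _ ≤ 1/((d+1)*((i:ℝ)+1)^3) := by
        have : (1:ℝ) ≤ (i:ℝ)+1 := by linarith [(Nat.cast_nonneg i : (0:ℝ) ≤ i)]
        gcongr 1/(_ * ?_)
        exact pow_le_pow_right₀ this (by norm_num)
    _ = _ := by rw [mul_comm]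

lemma err2 {N J : ℕ} (h : J < N) : |(-1:ℝ)^(J+1) * (H 1 N - H 1 (N-1-J)/2 - H 1 (2*J+2+(N-1-J))/2) / ((J:ℝ)+1)^4| ≤
    1/(((J:ℝ)+1)^3 * ((N:ℝ)-J)) := by
  obtain ⟨d, rfl⟩ := Nat.exists_eq_add_of_lt h
  rw [show J+d+1-1-J = d by omega]
  push_cast
  rw [show (J:ℝ)+d+1-J = d+1 by ring, abs_div, abs_mul, abs_pow, abs_neg, abs_one, one_pow, one_mul]
  obtain ⟨h1, h2⟩ := H_diff d (J+1)
  obtain ⟨h3, h4⟩ := H_diff (J+d+1) (J+1)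
  rw [show d+(J+1) = J+d+1 by ring] at h1 h2
  rw [show J+d+1+(J+1) = 2*J+2+d by ring] at h3 h4
  have h5 : ((J+1:ℕ):ℝ)/(((J+d+1:ℕ):ℝ)+1) ≤ ((J+1:ℕ):ℝ)/((d:ℝ)+1) := by
    gcongr; push_cast; linarith [(Nat.cast_nonneg J : (0:ℝ) ≤ J)]
  have : |H 1 (J+d+1) - H 1 d/2 - H 1 (2*J+2+d)/2| ≤ ((J+1:ℕ):ℝ)/((d:ℝ)+1) := by
    rw [abs_le]; constructor <;> linarith
  rw [abs_of_nonneg (by positivity : (0:ℝ) ≤ ((J:ℝ)+1)^4)]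
  calc _ ≤ (((J+1:ℕ):ℝ)/((d:ℝ)+1))/((J:ℝ)+1)^4 := by gcongr
    _ = _ := by push_cast; field_simp

theorem ww_lim : Tendsto (fun N => ∑ n ∈ range N, ww n) atTop (𝓝 (3/2*zeta 5 + 2*zeta 2*zeta 3)) := by
  have E1 := err_lim (e := fun N i => (-1:ℝ)^(i+1) * (AA (N-1-i) - AA (2*i+2+(N-1-i))) /((i:ℝ)+1)^4) (fun N i h => err1 h)
  have E2 := err_lim (e := fun N J => (-1:ℝ)^(J+1) * (H 1 N - H 1 (N-1-J)/2 - H 1 (2*J+2+(N-1-J))/2) / ((J:ℝ)+1)^4) (fun N i h => err2 h)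
  have b5 := alt_tendsto 5 (by norm_num)
  have b2 := alt_tendsto 2 (by norm_num)
  have z5 := zeta_tendsto 5 (by norm_num)
  have z3 := zeta_tendsto 3 (by norm_num)
  have hfin := ((((((z5.const_mul (1/2)).add (b5.const_mul (3/2))).sub (b2.mul z3)).add (E1.const_mul (1/2))).sub E2).const_mul 4).sub
    ((b5.const_mul 14).add ((z5.const_mul 8).add (E1.const_mul 4)))
  have hv : (4 * (1/2 * zeta 5 + 3/2 * (-(1-2/2^5)*zeta 5) - -(1-2/2^2)*zeta 2*zeta 3 + 1/2*0 - 0) - (14*(-(1-2/2^5)*zeta 5) + (8*zeta 5+4*0))) = 3/2*zeta 5 + 2*zeta 2*zeta 3 := by ring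
  rw [hv] at hfin
  refine hfin.congr fun N => ?_
  have r1 := R1_fin N
  have r2 := R2_fin N
  have w : ∑ n ∈ range N, ww n = -4 * ∑ J ∈ range N, (-1:ℝ)^(J+1) * (2*H 3 J/((J:ℝ)+1)^2 + 2*H 1 J/((J:ℝ)+1)^4)
      - 16 * ∑ J ∈ range N, (-1:ℝ)^(J+1)/((J:ℝ)+1)^5 - 8 * ∑ i ∈ range N, 1/((i:ℝ)+1)^5 := by
    rw [mul_sum, mul_sum, mul_sum, ← sum_sub_distrib, ← sum_sub_distrib]
    refine sum_congr rfl fun n _ => ?_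
    unfold ww
    have := sgn_sq (n+1)
    linear_combination (-8/((n:ℝ)+1)^5) * this
  have e1 : ∑ i ∈ range N, (-1:ℝ)^(i+1) * (AA (N-1-i) - AA (2*i+2+(N-1-i))) /(2*((i:ℝ)+1)^4) =
     1/2 * ∑ i ∈ range N, (-1:ℝ)^(i+1) * (AA (N-1-i) - AA (2*i+2+(N-1-i))) /((i:ℝ)+1)^4 := by
    rw [mul_sum]
    refine sum_congr rfl fun n _ => ?_
    field_simp
  rw [e1] at r2
  rw [w, r1]
  linarith

theorem ee_lim : Tendsto (fun M => ∑ n ∈ range M, (coeff 3 (K0 1 * gg 1 0 n) + coeff 3 (K0 (-1) * gg (-1) 0 n)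
    - 2 * coeff 3 (K0 0 * gg 0 0 n))) atTop (𝓝 (32 * (3/2*zeta 5 + 2*zeta 2*zeta 3 - 8))) := by
  have h := ((ww_lim.comp ((tendsto_add_atTop_nat 1).comp tendsto_two_mul)).sub_const 8).const_mul 32
  refine h.congr fun M => ?_
  simp only [Function.comp, ee_term]
  rw [sum_range_succ', even_odd_sum, ← mul_sum, sum_add_distrib]
  have : ww 0 = 8 := by simp [ww, H_zero]; norm_num
  rw [this]; ring

end S7

open Filter Topology
namespace S7
open PowerSeries Finset

noncomputable def kg (n k : ℕ) : ℝ := ((n-k-1).factorial : ℝ) / ((n+k).factorial : ℝ)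
noncomputable def kc (k : ℕ) : ℝ := (-1)^(k+1) * (k.factorial : ℝ)^2 * H 2 k

lemma kg_step (K d : ℕ) : kg (K+2+d) K = (((K:ℝ)+2+d)^2 - (K+1)^2) * kg (K+2+d) (K+1) := by
  unfold kg
  rw [show K+2+d-K-1 = d+1 by omega, show K+2+d-(K+1)-1 = d by omega,
    show K+2+d+(K+1) = (K+2+d+K)+1 by ring, Nat.factorial_succ, Nat.factorial_succ]
  have h1 : ((K+2+d+K).factorial : ℝ) ≠ 0 := by positivity
  push_cast
  field_simp
  ring

lemma koe (n K : ℕ) (h : K + 1 ≤ n) : 1/(n:ℝ)^5 = ∑ k ∈ range K, kc k * kg n (k+1) +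
    (-1)^K * (K.factorial:ℝ)^2 * (1/(n:ℝ)^4 - H 2 K/(n:ℝ)^2) * kg n K := by
  induction K with
  | zero =>
    obtain ⟨m, rfl⟩ := Nat.exists_eq_add_of_le h
    simp [kg, H_zero]
    rw [show 1+m = m+1 by ring, Nat.factorial_succ]
    push_cast
    have : (m.factorial:ℝ) ≠ 0 := by positivity
    field_simp
    ring
  | succ K ih =>
    rw [ih (by omega), sum_range_succ, add_assoc]
    congr 1
    obtain ⟨d, rfl⟩ := Nat.exists_eq_add_of_le h
    rw [show K+1+1+d = K+2+d by ring, kg_step, H_succ, Nat.factorial_succ]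
    unfold kc
    push_cast
    rw [pow_succ]
    field_simp
    ring

noncomputable def en (n : ℕ) : ℝ := (-1:ℝ)^n / (((n:ℝ)+1)^3 * ((2*(n+1)).choose (n+1) : ℝ))

lemma en_eq (n : ℕ) : en n = (-1)^n * (n.factorial:ℝ)^2 / (((n:ℝ)+1) * ((2*(n+1)).factorial : ℝ)) := by
  have h := Nat.choose_mul_factorial_mul_factorial (show n+1 ≤ 2*(n+1) by omega)
  rw [show 2*(n+1)-(n+1) = n+1 by omega] at h
  have h' : ((2*(n+1)).choose (n+1) : ℝ) * ((n+1).factorial:ℝ) * ((n+1).factorial:ℝ) = ((2*(n+1)).factorial:ℝ) := by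
    exact_mod_cast h
  unfold en
  rw [← h', Nat.factorial_succ]
  have p2 : (0:ℝ) < ((2*(n+1)).choose (n+1) : ℝ) := by exact_mod_cast Nat.centralBinom_pos (n+1)
  have : (n.factorial:ℝ) ≠ 0 := by positivity
  push_cast
  field_simp

lemma en_sig (n : ℕ) : en n = sig n / (2*((n:ℝ)+1)^2*(2*n+1)) := by
  have h := sig_succ n
  have e : en n = - sig (n+1) / ((n:ℝ)+1)^3 := by
    unfold en sig
    have p2 : (0:ℝ) < ((2*(n+1)).choose (n+1) : ℝ) := by exact_mod_cast Nat.centralBinom_pos (n+1)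
    rw [pow_succ (-1:ℝ) n]
    field_simp
  rw [e, h]; field_simp

lemma koe_n (n : ℕ) : 1/((n:ℝ)+1)^5 = ∑ k ∈ range n, kc k * kg (n+1) (k+1) + 2*en n*(1/((n:ℝ)+1)^2 - H 2 n) := by
  have h := koe (n+1) n le_rfl
  push_cast at h
  rw [h]
  congr 1
  rw [en_eq]
  unfold kg
  rw [show n+1-n-1 = 0 by omega, show 2*(n+1) = (n+1+n)+1 by ring, Nat.factorial_succ (n+1+n)]
  have : ((n+1+n).factorial:ℝ) ≠ 0 := by positivity
  push_cast
  rw [Nat.factorial_zero]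
  push_cast
  field_simp
  ring

noncomputable def ku (M k : ℕ) : ℝ := ((M-k).factorial:ℝ)/((M+k).factorial:ℝ)

lemma kg_sum (k d : ℕ) : ∑ q ∈ range d, kg (k+2+q) (k+1) = 1/(2*((k:ℝ)+1)) * (1/((2*(k+1)).factorial:ℝ) - ku (k+1+d) (k+1)) := by
  induction d with
  | zero => simp [ku]; right; rw [show 2*(k+1) = k+1+(k+1) by ring]; simp
  | succ d ih =>
    rw [sum_range_succ, ih]
    unfold ku kg
    rw [show k+2+d-(k+1)-1 = d by omega, show k+1+d-(k+1) = d by omega, show k+1+(d+1)-(k+1) = d+1 by omega,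
      show k+1+(d+1)+(k+1) = (k+1+d+(k+1))+1 by ring, show k+2+d+(k+1) = (k+1+d+(k+1))+1 by ring,
      Nat.factorial_succ, Nat.factorial_succ]
    have h1 : ((k+1+d+(k+1)).factorial:ℝ) ≠ 0 := by positivity
    have h2 : ((2*(k+1)).factorial:ℝ) ≠ 0 := by positivity
    push_cast
    field_simp
    ring

lemma koe_sum (M : ℕ) : ∑ n ∈ range M, 1/((n:ℝ)+1)^5 =
    ∑ n ∈ range M, (2*en n/((n:ℝ)+1)^2 - 5/2*en n*H 2 n) - ∑ k ∈ range M, kc k / (2*((k:ℝ)+1)) * ku M (k+1) := by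
  simp only [koe_n]
  rw [sum_add_distrib, tri_swap (fun k n => kc k * kg (n+1) (k+1))]
  rw [← sum_add_distrib, ← sum_sub_distrib]
  refine sum_congr rfl fun k hk => ?_
  rw [mem_range] at hk
  rw [← mul_sum]
  have := kg_sum k (M-1-k)
  rw [show k+1+(M-1-k) = M by omega] at this
  have h2 : ∀ q, k+1+q+1 = k+2+q := fun q => by ring
  simp only [h2]
  rw [this, en_eq]
  unfold kc
  have h2 : ((2*(k+1)).factorial:ℝ) ≠ 0 := by positivity
  rw [pow_succ]
  field_simp
  ring

lemma H2_le (n : ℕ) : H 2 n ≤ zeta 2 := (zsum 2 le_rfl).sum_le_tsum _ (fun i _ => by positivity)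
lemma H2_nonneg (n : ℕ) : 0 ≤ H 2 n := sum_nonneg fun i _ => by positivity

lemma fact_bound (j d : ℕ) : (j+1).factorial * (j+1).factorial * d.factorial * (j+1+d+1) ≤ (j+1+d+(j+1)).factorial := by
  have h1 := Nat.choose_mul_factorial_mul_factorial (show j+1 ≤ j+1+d by omega)
  have h2 := Nat.choose_mul_factorial_mul_factorial (show j+1+d ≤ j+1+d+(j+1) by omega)
  rw [show j+1+d-(j+1) = d by omega] at h1
  rw [show j+1+d+(j+1)-(j+1+d) = j+1 by omega] at h2
  have h3 : j+1+d+1 ≤ (j+1+d+(j+1)).choose (j+1+d) := by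
    have : (j+1+d+1).choose (j+1+d) ≤ (j+1+d+(j+1)).choose (j+1+d) := Nat.choose_le_choose _ (by omega)
    simpa using this
  have h4 : 1 ≤ (j+1+d).choose (j+1) := Nat.choose_pos (by omega)
  rw [← h2, ← h1]
  calc _ = (j+1+d+1) * (1 * (j+1).factorial * d.factorial) * (j+1).factorial := by ring
    _ ≤ _ := by gcongr

lemma kerr {M k : ℕ} (h : k < M) : |kc k / (2*((k:ℝ)+1)) * ku M (k+1)| ≤ zeta 2 * (1/((k:ℝ)+1)^2) * (1/((M:ℝ)+1)) := by
  obtain ⟨d, rfl⟩ := Nat.exists_eq_add_of_lt h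
  have hb : (((k+1).factorial * (k+1).factorial * d.factorial * (k+1+d+1) : ℕ):ℝ) ≤ ((k+1+d+(k+1)).factorial:ℝ) := by
    exact_mod_cast fact_bound k d
  have hku : (k.factorial:ℝ)^2 * ku (k+d+1) (k+1) ≤ 1/((k:ℝ)+1)^2 * (1/(((k+d+1:ℕ):ℝ)+1)) := by
    unfold ku
    rw [show k+d+1-(k+1) = d by omega, show k+d+1+(k+1) = k+1+d+(k+1) by ring, one_div_mul_one_div,
      ← mul_div_assoc, div_le_div_iff₀ (by positivity) (by positivity)]
    rw [Nat.factorial_succ] at hb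
    push_cast at hb ⊢
    linarith
  have hku0 : 0 ≤ ku (k+d+1) (k+1) := by unfold ku; positivity
  have hz : 0 ≤ zeta 2 := (H2_nonneg 0).trans (H2_le 0)
  have e : |kc k / (2*((k:ℝ)+1)) * ku (k+d+1) (k+1)| = H 2 k * ((k.factorial:ℝ)^2 * ku (k+d+1) (k+1)) * (1/(2*((k:ℝ)+1))) := by
    unfold kc
    rw [abs_mul, abs_div, abs_mul, abs_mul, abs_pow, abs_neg, abs_one, one_pow, abs_of_nonneg (H2_nonneg k),
      abs_of_nonneg hku0, abs_of_nonneg (by positivity : (0:ℝ) ≤ (k.factorial:ℝ)^2),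
      abs_of_nonneg (by positivity : (0:ℝ) ≤ 2*((k:ℝ)+1))]
    ring
  rw [e]
  have h1 : 1/(2*((k:ℝ)+1)) ≤ 1 := by
    rw [div_le_one (by positivity)]; linarith [(Nat.cast_nonneg k : (0:ℝ) ≤ k)]
  calc _ ≤ zeta 2 * (1/((k:ℝ)+1)^2 * (1/(((k+d+1:ℕ):ℝ)+1))) * 1 := by
        have := H2_le k
        have := H2_nonneg k
        gcongr
    _ = _ := by ring

lemma koe_lim : Tendsto (fun M => ∑ n ∈ range M, (2*en n/((n:ℝ)+1)^2 - 5/2*en n*H 2 n)) atTop (𝓝 (zeta 5)) := by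
  have hz : 0 ≤ zeta 2 := (H2_nonneg 0).trans (H2_le 0)
  have h0 : Tendsto (fun M => ∑ k ∈ range M, kc k / (2*((k:ℝ)+1)) * ku M (k+1)) atTop (𝓝 0) := by
    have hb : Tendsto (fun M : ℕ => zeta 2 * zeta 2 * (1/((M:ℝ)+1))) atTop (𝓝 0) := by
      simpa using (tendsto_one_div_add_atTop_nhds_zero_nat (𝕜 := ℝ)).const_mul (zeta 2 * zeta 2)
    refine squeeze_zero_norm (fun M => ?_) hb
    rw [Real.norm_eq_abs]
    refine (abs_sum_le_sum_abs _ _).trans ((sum_le_sum fun k hk => kerr (mem_range.1 hk)).trans ?_)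
    rw [← sum_mul, ← mul_sum]
    have := H2_le M
    unfold H at this
    gcongr
  have := (zeta_tendsto 5 (by norm_num)).add h0
  rw [add_zero] at this
  refine this.congr fun M => ?_
  rw [koe_sum]; ring

lemma sig_abs (n : ℕ) : |sig n| ≤ 1 := by
  unfold sig
  have p : 1 ≤ (2*n).choose n := Nat.centralBinom_pos n
  have p' : (1:ℝ) ≤ ((2*n).choose n : ℝ) := by exact_mod_cast p
  rw [abs_div, abs_pow, abs_neg, abs_one, one_pow, abs_of_nonneg (by positivity)]
  exact (div_le_one (by positivity)).2 p'

lemma GG_lim : Tendsto GG atTop (𝓝 0) := by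
  have hz : 0 ≤ zeta 2 := (H2_nonneg 0).trans (H2_le 0)
  have hb : Tendsto (fun n : ℕ => (4 * zeta 2 + 10) * (1/((n:ℝ)+1))) atTop (𝓝 0) := by
    simpa using (tendsto_one_div_add_atTop_nhds_zero_nat (𝕜 := ℝ)).const_mul (4 * zeta 2 + 10)
  refine squeeze_zero_norm (fun n => ?_) hb
  rw [Real.norm_eq_abs]
  unfold GG
  have hn : (0:ℝ) ≤ n := by positivity
  have h1 := H2_le n
  have h2 := H2_nonneg n
  have h3 := H2_le (2*n)
  have h4 := H2_nonneg (2*n)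
  have one : (1:ℝ) ≤ 2*n+1 := by linarith
  have q3 : 1/(2*(n:ℝ)+1)^3 ≤ 1/((n:ℝ)+1) := by
    refine one_div_le_one_div_of_le (by positivity) ?_
    calc (n:ℝ)+1 ≤ (2*n+1)^1 := by linarith
      _ ≤ _ := pow_le_pow_right₀ one (by norm_num)
  have q5 : 1/(2*(n:ℝ)+1)^5 ≤ 1/((n:ℝ)+1) := by
    refine one_div_le_one_div_of_le (by positivity) ?_
    calc (n:ℝ)+1 ≤ (2*n+1)^1 := by linarith
      _ ≤ _ := pow_le_pow_right₀ one (by norm_num)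
  rw [abs_mul]
  have e : |-(2*H 2 (2*n)+3/2*H 2 n)/(2*(n:ℝ)+1)^3 - 10/(2*(n:ℝ)+1)^5| = (2*H 2 (2*n)+3/2*H 2 n) * (1/(2*(n:ℝ)+1)^3) + 10 * (1/(2*(n:ℝ)+1)^5) := by
    rw [← abs_neg, abs_of_nonneg]
    · ring
    · have : 0 ≤ (2*H 2 (2*n)+3/2*H 2 n) * (1/(2*(n:ℝ)+1)^3) + 10 * (1/(2*(n:ℝ)+1)^5) := by positivity
      exact this.trans (le_of_eq (by ring))
  rw [e]
  calc _ ≤ 1 * ((4 * zeta 2) * (1/((n:ℝ)+1)) + 10 * (1/((n:ℝ)+1))) := by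
        have := sig_abs n
        gcongr
        linarith
    _ = _ := by ring

lemma ct_diff {t : ℝ} (ht : |t| ≤ 2) : Tendsto (fun M => ∑ n ∈ range M, ct t n - ∑ n ∈ range M, coeff 3 (K0 t * gg t 0 n)) atTop (𝓝 0) := by
  have h2 : Tendsto (fun M => Nm (K0 t * (∑ n∈range M, hh t n 0 - ∑ j∈range M, gg t 0 j))) atTop (𝓝 0) := by
    have := (main_limit ht).const_mul (Nm (K0 t))
    rw [mul_zero] at this
    exact squeeze_zero (fun _ => Nm_nonneg _) (fun M => Nm_mul _ _) this
  have h3 := tendsto_coeff_of_Nm h2 (by norm_num : 3 < 4)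
  refine h3.congr fun M => ?_
  simp only [ct, ← map_sum, ← mul_sum, ← map_sub]
  congr 1; ring

lemma T_lim : Tendsto (fun M => ∑ n ∈ range M, en n * (H 2 (2*n+1) + 3/4*H 2 n - 27/4/((n:ℝ)+1)^2)) atTop
    (𝓝 (79/10*zeta 5 - 28/5*zeta 2*zeta 3)) := by
  have d2 := ct_diff (t := 2) (by norm_num)
  have dm := ct_diff (t := -1) (by norm_num)
  have d1 := ct_diff (t := 1) (by norm_num)
  have d0 := ct_diff (t := 0) (by norm_num)
  have hG := GG_lim
  have big := ((((((d2.add q2_lim).const_mul (1/4)).add ((dm.const_mul (3/4)).sub (qm1_lim.const_mul (1/2)))).add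
    ((d1.const_mul (5/4)).sub (d0.const_mul (5/2)))).add (ee_lim.const_mul (5/4))).sub ((hG.sub_const (GG 0)).const_mul 8)).const_mul (-1/10)
  have g0 : GG 0 = -10 := by simp [GG, sig_zero, H_zero]
  rw [g0] at big
  convert big using 1
  · funext M
    have key : ∑ n ∈ range M, (1/4*ct 2 n + 3/4*ct (-1) n + 5/4*ct 1 n - 5/2*ct 0 n) =
       -10 * ∑ n ∈ range M, en n * (H 2 (2*n+1) + 3/4*H 2 n - 27/4/((n:ℝ)+1)^2) + 8 * (GG M - GG 0) := by
      rw [← sum_range_sub GG, mul_sum, mul_sum, ← sum_add_distrib]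
      refine sum_congr rfl fun n _ => ?_
      rw [D_n, en_sig]
    rw [g0] at key
    simp only [sum_add_distrib, sum_sub_distrib, ← mul_sum] at key ⊢
    linarith
  · congr 1; ring

lemma zeta_two_eq : zeta 2 = Real.pi^2/6 := by
  have h := (hasSum_nat_add_iff' 1).2 hasSum_zeta_two
  have h2 := h.tsum_eq
  unfold zeta
  simpa using h2

theorem final : Tendsto (fun N => ∑ n ∈ Finset.range N,
      (-1:ℝ)^n / (((n:ℝ)+1)^3 * ((2*(n+1)).choose (n+1) : ℝ)) *
        (H 2 (2*n+1) - 123/16 * H 2 n))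
      atTop (𝓝 (451 * zeta 5 / 40 - 14 * Real.pi^2 * zeta 3 / 15)) := by
  have h := T_lim.add (koe_lim.const_mul (27/8))
  rw [zeta_two_eq] at h
  convert h using 1
  · funext M
    rw [mul_sum, ← sum_add_distrib]
    refine sum_congr rfl fun n _ => ?_
    unfold en
    ring
  · congr 1; ring

end S7

theorem stmt_7 :
    Tendsto (fun N => ∑ n ∈ Finset.range N,
      (-1:ℝ)^n / (((n:ℝ)+1)^3 * ((2*(n+1)).choose (n+1) : ℝ)) *
        (H 2 (2*n+1) - 123/16 * H 2 n))
      atTop (𝓝 (451 * zeta 5 / 40 - 14 * Real.pi^2 * zeta 3 / 15)) :=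
  S7.final
end

section
/- $\sum_{n=1}^{\infty} \frac{1}{n^2 \binom{2n}{n}}\left(6 H_{\lfloor n/2 \rfloor}^{(2)} - \frac{(-1)^n}{n^2}\right) = \frac{13\pi^4}{1620}$. -/
open Filter Topology

namespace Aux9

/-- harmonic numbers -/
noncomputable def A (n : ℕ) : ℝ := ∑ k ∈ Finset.range n, 1 / ((k:ℝ) + 1)

/-- alternating sums of inverse squares -/
noncomputable def r (n : ℕ) : ℝ := ∑ k ∈ Finset.range n, (-1:ℝ)^(k+1) / ((k:ℝ) + 1)^2

noncomputable def W (i j : ℕ) : ℝ := (i.factorial : ℝ) * j.factorial / ((i+j+1).factorial : ℝ)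

noncomputable def hh (i j : ℕ) : ℝ :=
  W i j / ((j:ℝ)+1) * (-6 * (H 2 i + H 2 j) + 2 * (A i - A j)^2 + 4 * (A i - A j) / ((j:ℝ)+1)
    + 4 / ((j:ℝ)+1)^2 + 4 * r i) - 2 * (-1:ℝ)^i * W i j * (A i - A j)^2 / ((i:ℝ)+j+1)

noncomputable def vv (i j : ℕ) : ℝ :=
  W i j / ((i:ℝ)+1) * (-6 * (H 2 i + H 2 j) + 2 * (A i - A j)^2 - 4 * (A i - A j) / ((i:ℝ)+1)
    + 4 / ((i:ℝ)+1)^2 + 4 * r i)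
  - (-1:ℝ)^i * W i j * (2 * (1/((i:ℝ)+1) + 1/((i:ℝ)+j+1)) * (A i - A j)^2
      - 4 * (A i - A j) / ((i:ℝ)+1)^2 + 4 / ((i:ℝ)+1)^3)

lemma A_succ (n : ℕ) : A (n+1) = A n + 1 / ((n:ℝ)+1) := Finset.sum_range_succ _ _
lemma H_succ (n : ℕ) : H 2 (n+1) = H 2 n + 1 / ((n:ℝ)+1)^2 := Finset.sum_range_succ _ _
lemma r_succ (n : ℕ) : r (n+1) = r n - (-1:ℝ)^n / ((n:ℝ)+1)^2 := by
  unfold r; rw [Finset.sum_range_succ, pow_succ]; ring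

lemma W_succ_left (i j : ℕ) : W (i+1) j = W i j * (((i:ℝ)+1) / ((i:ℝ)+j+2)) := by
  unfold W
  rw [show i+1+j+1 = (i+j+1)+1 by ring, Nat.factorial_succ (i+j+1), Nat.factorial_succ i]
  have h1 : ((i+j+1).factorial : ℝ) ≠ 0 := by positivity
  have h2 : (i:ℝ)+j+2 ≠ 0 := by positivity
  have h3 : (i:ℝ)+j+1+1 ≠ 0 := by positivity
  push_cast
  field_simp
  ring

lemma W_comm (i j : ℕ) : W i j = W j i := by
  unfold W; rw [show j+i+1 = i+j+1 by ring]; ring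

lemma W_succ_right (i j : ℕ) : W i (j+1) = W i j * (((j:ℝ)+1) / ((i:ℝ)+j+2)) := by
  rw [W_comm, W_succ_left, W_comm]; ring

set_option maxRecDepth 20000 in
set_option maxHeartbeats 1000000 in
lemma closed (i j : ℕ) : hh i j + vv i (j+1) = vv i j + hh (i+1) j := by
  unfold hh vv
  rw [W_succ_left, W_succ_right, A_succ, A_succ, H_succ, H_succ, r_succ, pow_succ (-1:ℝ) i]
  push_cast
  generalize W i j = w
  generalize A i = a
  generalize A j = b
  generalize H 2 i = p
  generalize H 2 j = q
  generalize r i = t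
  generalize (-1:ℝ)^i = e
  have hi : (0:ℝ) ≤ i := Nat.cast_nonneg i
  have hj : (0:ℝ) ≤ j := Nat.cast_nonneg j
  generalize (i:ℝ) = x at *
  generalize (j:ℝ) = y at *
  have h1 : x + 1 ≠ 0 := by positivity
  have h2 : y + 1 ≠ 0 := by positivity
  have h3 : x + y + 1 ≠ 0 := by positivity
  have h4 : x + y + 2 ≠ 0 := by positivity
  rw [show x + (y+1) + 1 = x + y + 2 by ring, show x + 1 + y + 1 = x + y + 2 by ring]
  field_simp
  ring

lemma col (M j : ℕ) : ∑ i ∈ Finset.range M, vv i (j+1)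
    = ∑ i ∈ Finset.range M, vv i j + hh M j - hh 0 j := by
  induction M with
  | zero => simp
  | succ n ih => rw [Finset.sum_range_succ, Finset.sum_range_succ, ih]; linarith [closed n j]

lemma path (M : ℕ) : ∑ n ∈ Finset.range M, (vv n n + hh (n+1) n)
    = ∑ j ∈ Finset.range M, hh 0 j + ∑ i ∈ Finset.range M, vv i M := by
  induction M with
  | zero => simp
  | succ n ih =>
    rw [Finset.sum_range_succ, ih, col, Finset.sum_range_succ, Finset.sum_range_succ]; ring

lemma W_diag (n : ℕ) : W n n = 2 / (((n:ℝ)+1) * ((2*(n+1)).choose (n+1) : ℝ)) := by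
  have h := Nat.succ_mul_centralBinom_succ n
  have h2 : (((2*(n+1)).choose (n+1) : ℕ) : ℝ) * ((n+1).factorial * (n+1).factorial)
      = ((2*(n+1)).factorial : ℝ) := by
    have := Nat.choose_mul_factorial_mul_factorial (show n+1 ≤ 2*(n+1) by omega)
    rw [show 2*(n+1) - (n+1) = n+1 by omega] at this
    rw [← this]; push_cast; ring
  have hc : (((2*(n+1)).choose (n+1) : ℕ) : ℝ) ≠ 0 := by
    have := Nat.choose_pos (show n+1 ≤ 2*(n+1) by omega)
    positivity
  rw [show 2*(n+1) = (n+n+1)+1 by ring, Nat.factorial_succ (n+n+1), Nat.factorial_succ n] at h2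
  rw [show 2*(n+1) = (n+n+1)+1 by ring] at hc ⊢
  unfold W
  have h1 : ((n+n+1).factorial : ℝ) ≠ 0 := by positivity
  have h3 : (n:ℝ)+1 ≠ 0 := by positivity
  push_cast at h2
  field_simp
  have h5 : ((n:ℝ)+1) * (((n+n+1+1).choose (n+1) : ℕ) * (((n:ℝ)+1)* n.factorial^2)
     - 2 * (n+n+1).factorial) = 0 := by linarith
  have := (mul_eq_zero.1 h5).resolve_left h3
  linarith

lemma diag (n : ℕ) : vv n n + hh (n+1) n =
    1 / (((n:ℝ)+1)^2 * ((2*(n+1)).choose (n+1) : ℝ)) *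
      (12 * r n - 36 * H 2 n + 12 / ((n:ℝ)+1)^2 - 11 * (-1:ℝ)^n / ((n:ℝ)+1)^2) := by
  unfold hh vv
  rw [W_succ_left, A_succ, H_succ, r_succ, pow_succ (-1:ℝ) n, W_diag]
  have hc : (((2*(n+1)).choose (n+1) : ℕ) : ℝ) ≠ 0 := by
    have := Nat.choose_pos (show n+1 ≤ 2*(n+1) by omega)
    positivity
  generalize (((2*(n+1)).choose (n+1) : ℕ) : ℝ) = c at *
  generalize A n = a
  generalize H 2 n = p
  generalize r n = t
  generalize (-1:ℝ)^n = e
  push_cast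
  have hi : (0:ℝ) ≤ n := Nat.cast_nonneg n
  generalize (n:ℝ) = x at *
  have h1 : x + 1 ≠ 0 := by positivity
  rw [show x + x + 2 = 2 * (x+1) by ring, show x + 1 + x + 1 = 2 * (x+1) by ring]
  have h3 : x + x + 1 ≠ 0 := by positivity
  field_simp
  ring

lemma axis (j : ℕ) : hh 0 j = -(2 * H 2 j / ((j:ℝ)+1)^2 + 4 * A j / ((j:ℝ)+1)^3)
    - 4 * (H 2 j / ((j:ℝ)+1)^2) + 4 * (1 / ((j:ℝ)+1)^4) := by
  have hw : W 0 j = 1 / ((j:ℝ)+1) := by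
    unfold W
    rw [zero_add, Nat.factorial_succ]
    have : (j.factorial : ℝ) ≠ 0 := by positivity
    push_cast
    field_simp
    simp
  have h0 : A 0 = 0 := by simp [A]
  have h1 : r 0 = 0 := by simp [r]
  have h2 : H 2 0 = 0 := by simp [H]
  unfold hh
  rw [hw, h0, h1, h2]
  have h3 : (j:ℝ)+1 ≠ 0 := by positivity
  push_cast
  field_simp
  ring

/-! Bounds -/
lemma A_nonneg (n : ℕ) : 0 ≤ A n := Finset.sum_nonneg fun _ _ => by positivity
lemma H_nonneg (n : ℕ) : 0 ≤ H 2 n := Finset.sum_nonneg fun _ _ => by positivity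
lemma A_mono {m n : ℕ} (h : m ≤ n) : A m ≤ A n :=
  Finset.sum_le_sum_of_subset_of_nonneg (Finset.range_mono h) fun _ _ _ => by positivity

lemma sq_le (k : ℕ) : 1 / ((k:ℝ)+1)^2 ≤ 1 / ((k:ℝ)+1) := by
  apply one_div_le_one_div_of_le (by positivity)
  nlinarith [Nat.cast_nonneg (α := ℝ) k]

lemma H_le_A (n : ℕ) : H 2 n ≤ A n := Finset.sum_le_sum fun k _ => sq_le k
lemma r_le_A (n : ℕ) : |r n| ≤ A n := by
  refine (Finset.abs_sum_le_sum_abs _ _).trans (Finset.sum_le_sum fun k _ => ?_)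
  rw [abs_div, abs_pow, abs_neg, abs_one, one_pow, abs_of_pos (by positivity : (0:ℝ) < ((k:ℝ)+1)^2)]
  exact sq_le k

lemma W_nonneg (i j : ℕ) : 0 ≤ W i j := by unfold W; positivity

lemma W_le (i j : ℕ) : W i j ≤ 1 / ((j:ℝ)+1) := by
  induction i with
  | zero =>
    unfold W
    rw [zero_add, Nat.factorial_succ]
    have : (j.factorial : ℝ) ≠ 0 := by positivity
    push_cast
    field_simp
    simp
  | succ i ih =>
    rw [W_succ_left]
    have : ((i:ℝ)+1) / ((i:ℝ)+j+2) ≤ 1 := by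
      rw [div_le_one (by positivity)]
      linarith [Nat.cast_nonneg (α := ℝ) j]
    calc _ ≤ W i j * 1 := mul_le_mul_of_nonneg_left this (W_nonneg _ _)
      _ ≤ _ := by linarith

lemma v_bound {i M : ℕ} (h : i ≤ M) :
    |vv i M| ≤ 60 * (1 + A M)^2 / ((M:ℝ)+1) * (1 / ((i:ℝ)+1)) := by
  have e1 : vv i M = W i M * (1/((i:ℝ)+1)) * ((-6 * (H 2 i + H 2 M) + 2 * (A i - A M)^2
      - 4 * (A i - A M) * (1/((i:ℝ)+1)) + 4 * (1/((i:ℝ)+1))^2 + 4 * r i)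
     - (-1:ℝ)^i * (2 * (1 + (((i:ℝ)+1)/((i:ℝ)+M+1))) * (A i - A M)^2
      - 4 * (A i - A M) * (1/((i:ℝ)+1)) + 4 * (1/((i:ℝ)+1))^2)) := by
    unfold vv
    have h1 : (i:ℝ)+1 ≠ 0 := by positivity
    have h2 : (i:ℝ)+M+1 ≠ 0 := by positivity
    field_simp
  have b1 := A_mono h
  have b2 := A_nonneg i
  have b3 := A_nonneg M
  have b4 := H_le_A i
  have b5 := H_le_A M
  have b6 := H_nonneg i
  have b7 := H_nonneg M
  have b8 := abs_le.1 (r_le_A i)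
  have c1 : 1/((i:ℝ)+1) ≤ 1 := by
    rw [div_le_one (by positivity)]; linarith [Nat.cast_nonneg (α := ℝ) i]
  have c0 : 0 ≤ 1/((i:ℝ)+1) := by positivity
  have d1 : ((i:ℝ)+1)/((i:ℝ)+M+1) ≤ 1 := by
    rw [div_le_one (by positivity)]; linarith [Nat.cast_nonneg (α := ℝ) M]
  have d0 : 0 ≤ ((i:ℝ)+1)/((i:ℝ)+M+1) := by positivity
  have w0 := W_nonneg i M
  have w1 := W_le i M
  rw [e1]
  generalize 1/((i:ℝ)+1) = c at *
  generalize ((i:ℝ)+1)/((i:ℝ)+M+1) = d at *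
  rw [abs_mul, abs_mul, abs_of_nonneg w0, abs_of_nonneg c0]
  obtain ⟨D, hD⟩ : ∃ D, D = A M - A i := ⟨_, rfl⟩
  have hD' : A i - A M = -D := by rw [hD]; ring
  have D0 : 0 ≤ D := by linarith
  have D1 : D ≤ A M := by linarith
  rw [hD']
  have k1 : D^2 ≤ (A M)^2 := by nlinarith
  have k2 : D * c ≤ A M := by nlinarith
  have k20 : 0 ≤ D * c := by positivity
  have k3 : c^2 ≤ 1 := by nlinarith
  have k4 : (1+d) * D^2 ≤ 2 * (A M)^2 := by nlinarith [sq_nonneg D]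
  have k40 : 0 ≤ (1+d) * D^2 := by positivity
  have hq : (1 + A M)^2 = 1 + 2 * A M + (A M)^2 := by ring
  have hq2 := sq_nonneg (A M)
  have key : |(-6 * (H 2 i + H 2 M) + 2 * (-D)^2 - 4 * (-D) * c + 4 * c^2 + 4 * r i)
     - (-1:ℝ)^i * (2 * (1 + d) * (-D)^2 - 4 * (-D) * c + 4 * c^2)| ≤ 60 * (1 + A M)^2 := by
    have t1 : |(-6 * (H 2 i + H 2 M) + 2 * (-D)^2 - 4 * (-D) * c + 4 * c^2 + 4 * r i)|
        ≤ 30 * (1 + A M)^2 := by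
      have q0 := sq_nonneg D
      have q1 := sq_nonneg c
      rw [abs_le]; constructor <;> linarith [hq]
    have t2 : |(-1:ℝ)^i * (2 * (1 + d) * (-D)^2 - 4 * (-D) * c + 4 * c^2)| ≤ 30 * (1 + A M)^2 := by
      rw [abs_mul, abs_pow, abs_neg, abs_one, one_pow, one_mul, abs_le]
      have q0 := sq_nonneg D
      have q1 := sq_nonneg c
      constructor <;> linarith [hq]
    exact (abs_sub _ _).trans (by linarith)
  calc _ ≤ (1 / ((M:ℝ)+1)) * c * (60 * (1 + A M)^2) := by gcongr
    _ = _ := by ring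

lemma A_le_log (n : ℕ) : A n ≤ 1 + Real.log n := by
  have h := harmonic_le_one_add_log n
  have : ((harmonic n : ℚ) : ℝ) = A n := by
    unfold harmonic A; push_cast; simp
  rwa [this] at h

lemma v_tendsto : Tendsto (fun M : ℕ => ∑ i ∈ Finset.range M, vv i M) atTop (𝓝 0) := by
  have hb : ∀ M : ℕ, |∑ i ∈ Finset.range M, vv i M| ≤ 60 * (2 + Real.log M)^3 / ((M:ℝ)) := by
    intro M
    rcases Nat.eq_zero_or_pos M with rfl | hM
    · simp
    have hM' : (0:ℝ) < M := by exact_mod_cast hM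
    have hA := A_nonneg M
    have hL := A_le_log M
    calc _ ≤ ∑ i ∈ Finset.range M, |vv i M| := Finset.abs_sum_le_sum_abs _ _
      _ ≤ ∑ i ∈ Finset.range M, 60 * (1 + A M)^2 / ((M:ℝ)+1) * (1 / ((i:ℝ)+1)) :=
        Finset.sum_le_sum fun i hi => v_bound (Finset.mem_range.1 hi).le
      _ = 60 * (1 + A M)^2 / ((M:ℝ)+1) * A M := by rw [← Finset.mul_sum]; rfl
      _ ≤ 60 * (1 + A M)^2 / ((M:ℝ)) * (1 + A M) := by
        gcongr <;> linarith
      _ = 60 * (1 + A M)^3 / ((M:ℝ)) := by ring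
      _ ≤ 60 * (2 + Real.log M)^3 / ((M:ℝ)) := by
        have : 1 + A M ≤ 2 + Real.log M := by linarith
        gcongr
  have hlim : Tendsto (fun M : ℕ => 60 * (2 + Real.log M)^3 / ((M:ℝ))) atTop (𝓝 0) := by
    have hx : Tendsto (fun x : ℝ => 60 * (2 + Real.log x)^3 / x) atTop (𝓝 0) := by
      have l (n : ℕ) : Tendsto (fun x : ℝ => Real.log x ^ n / x) atTop (𝓝 0) :=
        (Real.isLittleO_pow_log_id_atTop (n := n)).tendsto_div_nhds_zero
      have := ((((l 0).const_mul 480).add ((l 1).const_mul 720)).add ((l 2).const_mul 360)).add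
        ((l 3).const_mul 60)
      simp only [mul_zero, add_zero] at this
      refine this.congr fun x => ?_
      ring
    exact hx.comp tendsto_natCast_atTop_atTop
  exact squeeze_zero_norm hb hlim

end Aux9

namespace Aux9

lemma z2 : HasSum (fun n : ℕ => 1 / ((n:ℝ)+1)^2) (Real.pi^2/6) := by
  have := (hasSum_nat_add_iff' 1).2 hasSum_zeta_two
  simpa using this

lemma z4 : HasSum (fun n : ℕ => 1 / ((n:ℝ)+1)^4) (Real.pi^4/90) := by
  have := (hasSum_nat_add_iff' 1).2 hasSum_zeta_four
  simpa using this

lemma shuffle_fin (n : ℕ) :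
    ∑ k ∈ Finset.range (n+1), 1 / ((k:ℝ)+1)^2 * (1 / (((n-k : ℕ):ℝ)+1)^2)
      = 2 * H 2 (n+1) / (((n+1 : ℕ):ℝ)+1)^2 + 4 * A (n+1) / (((n+1 : ℕ):ℝ)+1)^3 := by
  have hH : ∑ k ∈ Finset.range (n+1), 1 / (((n-k : ℕ):ℝ)+1)^2 = H 2 (n+1) :=
    Finset.sum_range_reflect (fun k : ℕ => 1 / ((k:ℝ)+1)^2) (n+1)
  have hA : ∑ k ∈ Finset.range (n+1), 1 / (((n-k : ℕ):ℝ)+1) = A (n+1) :=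
    Finset.sum_range_reflect (fun k : ℕ => 1 / ((k:ℝ)+1)) (n+1)
  have hH' : ∑ k ∈ Finset.range (n+1), 1 / ((k:ℝ)+1)^2 = H 2 (n+1) := rfl
  have hA' : ∑ k ∈ Finset.range (n+1), 1 / ((k:ℝ)+1) = A (n+1) := rfl
  have e : ∀ k ∈ Finset.range (n+1), 1 / ((k:ℝ)+1)^2 * (1 / (((n-k : ℕ):ℝ)+1)^2)
      = 1 / (((n+1 : ℕ):ℝ)+1)^2 * (1 / ((k:ℝ)+1)^2 + 1 / (((n-k : ℕ):ℝ)+1)^2)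
        + 2 / (((n+1 : ℕ):ℝ)+1)^3 * (1 / ((k:ℝ)+1) + 1 / (((n-k : ℕ):ℝ)+1)) := by
    intro k hk
    have hk' : k ≤ n := by have := Finset.mem_range.1 hk; omega
    obtain ⟨m, rfl⟩ := Nat.exists_eq_add_of_le hk'
    rw [show k + m - k = m by omega]
    push_cast
    have h1 : (k:ℝ)+1 ≠ 0 := by positivity
    have h2 : (m:ℝ)+1 ≠ 0 := by positivity
    have h3 : (k:ℝ)+m+1+1 ≠ 0 := by positivity
    field_simp
    ring
  rw [Finset.sum_congr rfl e, Finset.sum_add_distrib, ← Finset.mul_sum, ← Finset.mul_sum,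
    Finset.sum_add_distrib, Finset.sum_add_distrib, hH, hA, hH', hA']
  ring

lemma shuffle : HasSum (fun j : ℕ => 2 * H 2 j / ((j:ℝ)+1)^2 + 4 * A j / ((j:ℝ)+1)^3)
    ((Real.pi^2/6)^2) := by
  have hs : Summable fun n : ℕ => ‖1 / ((n:ℝ)+1)^2‖ := z2.summable.norm
  have h := hasSum_sum_range_mul_of_summable_norm hs hs
  rw [z2.tsum_eq] at h
  simp only [shuffle_fin] at h
  have h2 := (hasSum_nat_add_iff (f := fun j : ℕ => 2 * H 2 j / ((j:ℝ)+1)^2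
    + 4 * A j / ((j:ℝ)+1)^3) 1).1 h
  have h0 : A 0 = 0 := by simp [A]
  have h2' : H 2 0 = 0 := by simp [H]
  simp only [Finset.sum_range_one, h0, h2'] at h2
  simpa [sq] using h2

lemma symm_fin (M : ℕ) : ∑ n ∈ Finset.range M, H 2 n / ((n:ℝ)+1)^2
    = ((H 2 M)^2 - ∑ n ∈ Finset.range M, 1 / ((n:ℝ)+1)^4) / 2 := by
  induction M with
  | zero => simp [H]
  | succ n ih =>
    rw [Finset.sum_range_succ, Finset.sum_range_succ, ih, H_succ]
    have : (n:ℝ)+1 ≠ 0 := by positivity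
    field_simp
    ring

lemma H_tendsto : Tendsto (fun M => H 2 M) atTop (𝓝 (Real.pi^2/6)) := z2.tendsto_sum_nat

lemma symm_tendsto : Tendsto (fun M => ∑ n ∈ Finset.range M, H 2 n / ((n:ℝ)+1)^2) atTop
    (𝓝 (((Real.pi^2/6)^2 - Real.pi^4/90) / 2)) := by
  simp only [symm_fin]
  exact ((H_tendsto.pow 2).sub z4.tendsto_sum_nat).div_const 2

lemma H_le_two (n : ℕ) : H 2 n ≤ 2 := by
  have h : H 2 n ≤ Real.pi^2/6 := sum_le_hasSum _ (fun _ _ => by positivity) z2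
  nlinarith [Real.pi_lt_d2, Real.pi_pos]

/-! The arcsine part -/

noncomputable def u (n : ℕ) (t : ℝ) : ℝ := (2 * Real.sin t)^(2*n) / (n.centralBinom : ℝ)

noncomputable def u1 (m : ℕ) (t : ℝ) : ℝ :=
  (2*(m:ℝ)+2) * (2 * Real.sin t)^(2*m+1) * (2 * Real.cos t) / ((m+1).centralBinom : ℝ)

lemma cb_ne (n : ℕ) : (n.centralBinom : ℝ) ≠ 0 := by
  exact_mod_cast Nat.centralBinom_ne_zero n

lemma u_deriv (m : ℕ) (t : ℝ) : HasDerivAt (u (m+1)) (u1 m t) t := by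
  have h := (((Real.hasDerivAt_sin t).const_mul 2).pow (2*(m+1))).div_const
    ((m+1).centralBinom : ℝ)
  have e : u (m+1) = fun x => (2 * Real.sin x)^(2*(m+1)) / ((m+1).centralBinom : ℝ) := rfl
  rw [e]
  refine h.congr_deriv ?_
  symm
  unfold u1
  rw [show 2*(m+1)-1 = 2*m+1 by omega]
  push_cast
  ring

lemma u1_deriv (m : ℕ) (t : ℝ) :
    HasDerivAt (u1 m) (4 * ((m:ℝ)+1)^2 * (u m t - u (m+1) t)) t := by
  have h := (((((Real.hasDerivAt_sin t).const_mul 2).pow (2*m+1)).const_mul (2*(m:ℝ)+2)).mul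
    ((Real.hasDerivAt_cos t).const_mul 2)).div_const ((m+1).centralBinom : ℝ)
  have e : u1 m = fun x => (2*(m:ℝ)+2) * (2 * Real.sin x)^(2*m+1) * (2 * Real.cos x)
    / ((m+1).centralBinom : ℝ) := rfl
  rw [e]
  refine h.congr_deriv ?_
  symm
  unfold u
  rw [show 2*m+1-1 = 2*m by omega]
  have hc : ((m:ℝ)+1) * ((m+1).centralBinom : ℝ) = 2 * (2*m+1) * (m.centralBinom : ℝ) := by
    exact_mod_cast Nat.succ_mul_centralBinom_succ m
  have hs : Real.cos t ^ 2 = 1 - Real.sin t ^ 2 := by rw [← Real.sin_sq_add_cos_sq t]; ring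
  have c1 := cb_ne m
  have c2 := cb_ne (m+1)
  have hq : (2 * Real.sin t)^(2*m) / (m.centralBinom : ℝ) * ((m:ℝ)+1)
      = (2 * Real.sin t)^(2*m) * (2 * (2*m+1)) / ((m+1).centralBinom : ℝ) := by
    rw [div_mul_eq_mul_div, div_eq_div_iff c1 c2]
    linear_combination (2 * Real.sin t)^(2*m) * hc
  have e1 : (2 * Real.sin t)^(2*(m+1)) = (2 * Real.sin t)^(2*m) * (4 * Real.sin t ^ 2) := by ring
  have e2 : (2 * Real.sin t)^(2*m+1) = (2 * Real.sin t)^(2*m) * (2 * Real.sin t) := by ring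
  simp only [Pi.pow_apply]
  rw [e1, e2]
  push_cast
  have : 4 * ((m:ℝ)+1)^2 * ((2 * Real.sin t)^(2*m) / (m.centralBinom : ℝ)
      - (2 * Real.sin t)^(2*m) * (4 * Real.sin t ^ 2) / ((m+1).centralBinom : ℝ))
      = 4 * ((m:ℝ)+1) * ((2 * Real.sin t)^(2*m) / (m.centralBinom : ℝ) * ((m:ℝ)+1))
       - 4 * ((m:ℝ)+1)^2 * ((2 * Real.sin t)^(2*m) * (4 * Real.sin t ^ 2)
          / ((m+1).centralBinom : ℝ)) := by ring
  rw [this, hq]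
  generalize (2 * Real.sin t)^(2*m) = w
  field_simp
  linear_combination (-(4:ℝ)*(2*m+1)*w * 2) * hs

lemma u_zero (m : ℕ) : u (m+1) 0 = 0 := by simp [u]
lemma u1_zero (m : ℕ) : u1 m 0 = 0 := by simp [u1]

lemma u_nonneg (n : ℕ) (t : ℝ) : 0 ≤ u n t := by
  unfold u; rw [pow_mul]; positivity

lemma u_le (n : ℕ) {t : ℝ} (ht : t ∈ Set.Icc 0 (Real.pi/6)) : u n t ≤ 1 / (n.centralBinom : ℝ) := by
  have hp := Real.pi_pos
  have h0 : 0 ≤ Real.sin t := Real.sin_nonneg_of_nonneg_of_le_pi ht.1 (by linarith [ht.2])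
  have h1 : Real.sin t ≤ 1/2 := by
    rw [← Real.sin_pi_div_six]
    exact Real.sin_le_sin_of_le_of_le_pi_div_two (by linarith [ht.1]) (by linarith) ht.2
  unfold u
  gcongr
  exact pow_le_one₀ (by linarith) (by linarith)

lemma u_end (n : ℕ) : u n (Real.pi/6) = 1 / (n.centralBinom : ℝ) := by
  unfold u; rw [Real.sin_pi_div_six]; norm_num

lemma second_order {F G K : ℝ → ℝ} {c θ : ℝ} (hθ : θ ≤ 1) (hF : ∀ t, HasDerivAt F (G t) t)
    (hG : ∀ t, HasDerivAt G (K t) t) (F0 : F 0 = 0) (G0 : G 0 = 0)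
    (hK : ∀ t ∈ Set.Icc 0 θ, |K t| ≤ c) : ∀ t ∈ Set.Icc 0 θ, |F t| ≤ c := by
  have step : ∀ {F G : ℝ → ℝ}, (∀ t, HasDerivAt F (G t) t) → F 0 = 0 →
      (∀ t ∈ Set.Icc 0 θ, |G t| ≤ c) → ∀ t ∈ Set.Icc 0 θ, |F t| ≤ c := by
    intro F G hF F0 hG t ht
    have h := norm_image_sub_le_of_norm_deriv_right_le_segment (a := 0) (b := θ) (C := c)
      (fun x _ => (hF x).continuousAt.continuousWithinAt)
      (fun x _ => (hF x).hasDerivWithinAt)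
      (fun x hx => hG x ⟨hx.1, hx.2.le⟩) t ht
    rw [F0, sub_zero, sub_zero, Real.norm_eq_abs] at h
    have c0 : 0 ≤ c := (abs_nonneg _).trans (hG t ht)
    nlinarith [ht.1, ht.2]
  exact step hF F0 (step hG G0 hK)

lemma cb_lower (M : ℕ) : (M:ℝ) ≤ (M.centralBinom : ℝ) := by
  rcases Nat.eq_zero_or_pos M with rfl | h
  · simp
  have := Nat.choose_le_centralBinom 1 M
  rw [Nat.choose_one_right] at this
  have : M ≤ M.centralBinom := by omega
  exact_mod_cast this

noncomputable def y (M : ℕ) (t : ℝ) : ℝ := ∑ n ∈ Finset.range M, 1/((n:ℝ)+1)^2 * u (n+1) t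
noncomputable def y1 (M : ℕ) (t : ℝ) : ℝ := ∑ n ∈ Finset.range M, 1/((n:ℝ)+1)^2 * u1 n t
noncomputable def z (M : ℕ) (t : ℝ) : ℝ :=
  ∑ n ∈ Finset.range M, H 2 n/((n:ℝ)+1)^2 * u (n+1) t
noncomputable def z1 (M : ℕ) (t : ℝ) : ℝ :=
  ∑ n ∈ Finset.range M, H 2 n/((n:ℝ)+1)^2 * u1 n t

lemma y_deriv (M : ℕ) (t : ℝ) : HasDerivAt (y M) (y1 M t) t :=
  HasDerivAt.fun_sum fun n _ => (u_deriv n t).const_mul _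
lemma z_deriv (M : ℕ) (t : ℝ) : HasDerivAt (z M) (z1 M t) t :=
  HasDerivAt.fun_sum fun n _ => (u_deriv n t).const_mul _

lemma y1_deriv (M : ℕ) (t : ℝ) : HasDerivAt (y1 M) (4 * (1 - u M t)) t := by
  have h : HasDerivAt (y1 M) (∑ n ∈ Finset.range M, 1/((n:ℝ)+1)^2 *
      (4 * ((n:ℝ)+1)^2 * (u n t - u (n+1) t))) t :=
    HasDerivAt.fun_sum fun n _ => (u1_deriv n t).const_mul _
  convert h using 1
  clear h
  induction M with
  | zero => simp [u]
  | succ n ih =>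
    rw [Finset.sum_range_succ, ← ih]
    have : (n:ℝ)+1 ≠ 0 := by positivity
    field_simp
    ring

lemma z1_deriv (M : ℕ) (t : ℝ) : HasDerivAt (z1 M) (4 * y M t - 4 * H 2 M * u M t) t := by
  have h : HasDerivAt (z1 M) (∑ n ∈ Finset.range M, H 2 n/((n:ℝ)+1)^2 *
      (4 * ((n:ℝ)+1)^2 * (u n t - u (n+1) t))) t :=
    HasDerivAt.fun_sum fun n _ => (u1_deriv n t).const_mul _
  convert h using 1
  clear h
  induction M with
  | zero => simp [y, H]
  | succ n ih =>
    rw [Finset.sum_range_succ, ← ih, H_succ]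
    have e : y (n+1) t = y n t + 1/((n:ℝ)+1)^2 * u (n+1) t := Finset.sum_range_succ _ _
    rw [e]
    have : (n:ℝ)+1 ≠ 0 := by positivity
    field_simp
    ring

lemma y_est (M : ℕ) : ∀ t ∈ Set.Icc 0 (Real.pi/6),
    |y M t - 2 * t^2| ≤ 4 * (1 / (M.centralBinom : ℝ)) := by
  have hθ : Real.pi/6 ≤ 1 := by linarith [Real.pi_le_four]
  refine second_order (F := fun t => y M t - 2 * t^2) (G := fun t => y1 M t - 4 * t)
    (K := fun t => -4 * u M t) hθ ?_ ?_ ?_ ?_ ?_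
  · intro t
    refine HasDerivAt.congr_deriv ((y_deriv M t).sub (((hasDerivAt_id t).pow 2).const_mul 2)) ?_
    norm_num; try ring
  · intro t
    refine HasDerivAt.congr_deriv ((y1_deriv M t).sub ((hasDerivAt_id t).const_mul 4)) ?_
    norm_num; try ring
  · simp [y, u_zero]
  · simp [y1, u1_zero]
  · intro t ht
    rw [abs_mul, abs_of_nonneg (u_nonneg M t)]
    have := u_le M ht
    norm_num at this ⊢
    linarith

lemma z_est (M : ℕ) : ∀ t ∈ Set.Icc 0 (Real.pi/6),
    |z M t - 2/3 * t^4| ≤ 24 * (1 / (M.centralBinom : ℝ)) := by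
  have hθ : Real.pi/6 ≤ 1 := by linarith [Real.pi_le_four]
  refine second_order (F := fun t => z M t - 2/3 * t^4) (G := fun t => z1 M t - 8/3 * t^3)
    (K := fun t => 4 * (y M t - 2 * t^2) - 4 * (H 2 M * u M t)) hθ ?_ ?_ ?_ ?_ ?_
  · intro t
    refine HasDerivAt.congr_deriv ((z_deriv M t).sub (((hasDerivAt_id t).pow 4).const_mul (2/3))) ?_
    norm_num; try ring
  · intro t
    refine HasDerivAt.congr_deriv ((z1_deriv M t).sub (((hasDerivAt_id t).pow 3).const_mul (8/3))) ?_
    norm_num; try ring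
  · simp [z, u_zero]
  · simp [z1, u1_zero]
  · intro t ht
    have h1 := abs_le.1 (y_est M t ht)
    have h2 := u_le M ht
    have h3 := u_nonneg M t
    have h4 := H_nonneg M
    have h5 := H_le_two M
    have h6 : 0 ≤ H 2 M * u M t := by positivity
    have h7 : H 2 M * u M t ≤ 2 * (1 / (M.centralBinom : ℝ)) := by gcongr
    rw [abs_le]
    constructor <;> linarith [h1.1, h1.2]

lemma z_tendsto : Tendsto (fun M => z M (Real.pi/6)) atTop (𝓝 (Real.pi^4/1944)) := by
  have hc : Tendsto (fun M : ℕ => 24 * (1 / (M.centralBinom : ℝ))) atTop (𝓝 0) := by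
    have h1 : Tendsto (fun M : ℕ => (M.centralBinom : ℝ)) atTop atTop :=
      tendsto_atTop_mono cb_lower tendsto_natCast_atTop_atTop
    simpa using (h1.inv_tendsto_atTop).const_mul 24
  have hm : Real.pi/6 ∈ Set.Icc 0 (Real.pi/6) := ⟨by positivity, le_rfl⟩
  have h := squeeze_zero_norm (f := fun M => z M (Real.pi/6) - 2/3 * (Real.pi/6)^4)
    (fun M => z_est M _ hm) hc
  have h2 := h.add_const (2/3 * (Real.pi/6)^4)
  simp only [sub_add_cancel, zero_add] at h2
  convert h2 using 2
  ring

lemma H_floor (n : ℕ) : 6 * H 2 (n/2) = 12 * H 2 n + 12 * r n := by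
  induction n using Nat.strong_induction_on with
  | _ n ih =>
    rcases n with _ | _ | n
    · simp [H, r]
    · norm_num [H, r]
    · rw [show (n+1+1)/2 = n/2+1 by omega, H_succ, mul_add, ih n (by omega), H_succ, H_succ,
        r_succ, r_succ, pow_succ (-1:ℝ) n]
      rcases Nat.even_or_odd n with he | ho
      · rw [he.neg_one_pow]
        obtain ⟨k, rfl⟩ := he
        rw [show (k+k)/2 = k by omega]
        push_cast
        have h1 : (k:ℝ)+1 ≠ 0 := by positivity
        have h2 : (k:ℝ)+k+1 ≠ 0 := by positivity
        rw [show (k:ℝ)+k+1+1 = 2*(k+1) by ring]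
        field_simp
        ring
      · rw [ho.neg_one_pow]
        obtain ⟨k, rfl⟩ := ho
        rw [show (2*k+1)/2 = k by omega]
        push_cast
        have h1 : (k:ℝ)+1 ≠ 0 := by positivity
        have h2 : 2*(k:ℝ)+3 ≠ 0 := by positivity
        rw [show 2*(k:ℝ)+1+1+1 = 2*k+3 by ring, show 2*(k:ℝ)+1+1 = 2*(k+1) by ring]
        field_simp
        ring

end Aux9

theorem stmt_9 :
    Tendsto (fun N => ∑ n ∈ Finset.range N,
      1 / (((n:ℝ)+1)^2 * ((2*(n+1)).choose (n+1) : ℝ)) *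
        (6 * H 2 ((n+1)/2) - (-1:ℝ)^(n+1) / ((n:ℝ)+1)^2))
      atTop (𝓝 (13 * Real.pi^4 / 1620)) := by
  have hterm : ∀ n : ℕ, 1 / (((n:ℝ)+1)^2 * ((2*(n+1)).choose (n+1) : ℝ)) *
        (6 * H 2 ((n+1)/2) - (-1:ℝ)^(n+1) / ((n:ℝ)+1)^2)
      = (Aux9.vv n n + Aux9.hh (n+1) n)
        + 48 * (H 2 n/((n:ℝ)+1)^2 * Aux9.u (n+1) (Real.pi/6)) := by
    intro n
    rw [Aux9.diag, Aux9.H_floor, Aux9.H_succ, Aux9.r_succ, Aux9.u_end, Nat.centralBinom,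
      pow_succ (-1:ℝ) n]
    have hc : (((2*(n+1)).choose (n+1) : ℕ) : ℝ) ≠ 0 := by
      have := Nat.choose_pos (show n+1 ≤ 2*(n+1) by omega)
      positivity
    generalize (((2*(n+1)).choose (n+1) : ℕ) : ℝ) = c at *
    have h1 : (n:ℝ)+1 ≠ 0 := by positivity
    field_simp
    ring
  have hsum : ∀ N : ℕ, ∑ n ∈ Finset.range N,
      1 / (((n:ℝ)+1)^2 * ((2*(n+1)).choose (n+1) : ℝ)) *
        (6 * H 2 ((n+1)/2) - (-1:ℝ)^(n+1) / ((n:ℝ)+1)^2)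
      = (-(∑ j ∈ Finset.range N, (2 * H 2 j / ((j:ℝ)+1)^2 + 4 * Aux9.A j / ((j:ℝ)+1)^3))
        - 4 * ∑ j ∈ Finset.range N, H 2 j / ((j:ℝ)+1)^2
        + 4 * ∑ j ∈ Finset.range N, 1 / ((j:ℝ)+1)^4)
        + ∑ i ∈ Finset.range N, Aux9.vv i N + 48 * Aux9.z N (Real.pi/6) := by
    intro N
    rw [Finset.sum_congr rfl fun n _ => hterm n, Finset.sum_add_distrib, Aux9.path,
      ← Finset.mul_sum, Finset.sum_congr rfl fun j _ => Aux9.axis j, Finset.sum_add_distrib,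
      Finset.sum_sub_distrib, Finset.sum_neg_distrib, ← Finset.mul_sum, ← Finset.mul_sum]
    rfl
  simp only [hsum]
  have h := (((Aux9.shuffle.tendsto_sum_nat.neg.sub (Aux9.symm_tendsto.const_mul 4)).add
    (Aux9.z4.tendsto_sum_nat.const_mul 4)).add Aux9.v_tendsto).add
    (Aux9.z_tendsto.const_mul 48)
  convert h using 2
  ring
end
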